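/- Let u be an AB-entropy solution of u_t + f(x,u)_x = 0 on ℝ × [0,∞). Then the set-valued map x ↦ C(u,x) has closed graph with respect to uniform convergence: if x_n → x in ℝ, ζ_n ∈ C(u, x_n) for every n, and ζ_n → ζ uniformly on [0,T], then ζ ∈ C(u, x). -/

import Mathlib

open MeasureTheory Set Filter

noncomputable section

/-- The discontinuous flux `f(x,u) = f_l(u)` for `x < 0`, `f_r(u)` for `x > 0`
(the value at the interface is taken to be `f_r(u)`). -/
def dflux (fl fr : ℝ → ℝ) (x u : ℝ) : ℝ := if x < 0 then fl u else fr u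

/-- The connection function `c^{AB}`. -/
def cAB (A B : ℝ) (x : ℝ) : ℝ := if x ≤ 0 then A else B

/-- An `AB`-entropy solution of `u_t + f(x,u)_x = 0` on `ℝ × [0,∞)` with
initial datum `u0`, for the flux `f(x,·) = fl` on `x<0` and `fr` on `x>0`,
relative to the connection `(A,B)`.  The structure bundles the solution `u`
(as a function of `(x,t)`), its one-sided spatial limits `um x t = u(x-,t)` and
`up x t = u(x+,t)` (for `t > 0`), the weak (distributional) formulation, the
Kružkov entropy inequalities away from the interface, the `AB`-interface
entropy inequality, `L¹_loc`-continuity in time and the initial condition. -/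
structure ABSol (fl fr : ℝ → ℝ) (A B : ℝ) (u0 : ℝ → ℝ) where
  u : ℝ → ℝ → ℝ
  meas : Measurable (Function.uncurry u)
  bdd : ∃ M : ℝ, ∀ x t, |u x t| ≤ M
  um : ℝ → ℝ → ℝ
  up : ℝ → ℝ → ℝ
  um_spec : ∀ x t, 0 < t →
    Tendsto (fun y => u y t) (nhdsWithin x (Iio x)) (nhds (um x t))
  up_spec : ∀ x t, 0 < t →
    Tendsto (fun y => u y t) (nhdsWithin x (Ioi x)) (nhds (up x t))
  weak : ∀ φ : ℝ → ℝ → ℝ,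
    ContDiff ℝ 1 (fun p : ℝ × ℝ => φ p.1 p.2) →
    HasCompactSupport (fun p : ℝ × ℝ => φ p.1 p.2) →
    (∀ x t, t ≤ 0 → φ x t = 0) →
    (∫ p : ℝ × ℝ, (u p.1 p.2 * deriv (fun s => φ p.1 s) p.2 +
        dflux fl fr p.1 (u p.1 p.2) * deriv (fun y => φ y p.2) p.1)) = 0
  kruzkov_l : ∀ (k : ℝ) (φ : ℝ → ℝ → ℝ),
    ContDiff ℝ 1 (fun p : ℝ × ℝ => φ p.1 p.2) →
    HasCompactSupport (fun p : ℝ × ℝ => φ p.1 p.2) →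
    (∀ x t, 0 ≤ φ x t) →
    (∀ x t, 0 ≤ x ∨ t ≤ 0 → φ x t = 0) →
    0 ≤ ∫ p : ℝ × ℝ, (|u p.1 p.2 - k| * deriv (fun s => φ p.1 s) p.2 +
        Real.sign (u p.1 p.2 - k) * (fl (u p.1 p.2) - fl k) *
          deriv (fun y => φ y p.2) p.1)
  kruzkov_r : ∀ (k : ℝ) (φ : ℝ → ℝ → ℝ),
    ContDiff ℝ 1 (fun p : ℝ × ℝ => φ p.1 p.2) →
    HasCompactSupport (fun p : ℝ × ℝ => φ p.1 p.2) →
    (∀ x t, 0 ≤ φ x t) →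
    (∀ x t, x ≤ 0 ∨ t ≤ 0 → φ x t = 0) →
    0 ≤ ∫ p : ℝ × ℝ, (|u p.1 p.2 - k| * deriv (fun s => φ p.1 s) p.2 +
        Real.sign (u p.1 p.2 - k) * (fr (u p.1 p.2) - fr k) *
          deriv (fun y => φ y p.2) p.1)
  interfaceEntropy : ∀ φ : ℝ → ℝ → ℝ,
    ContDiff ℝ 1 (fun p : ℝ × ℝ => φ p.1 p.2) →
    HasCompactSupport (fun p : ℝ × ℝ => φ p.1 p.2) →
    (∀ x t, 0 ≤ φ x t) →
    (∀ x t, t ≤ 0 → φ x t = 0) →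
    0 ≤ ∫ p : ℝ × ℝ, (|u p.1 p.2 - cAB A B p.1| * deriv (fun s => φ p.1 s) p.2 +
        Real.sign (u p.1 p.2 - cAB A B p.1) *
          (dflux fl fr p.1 (u p.1 p.2) - dflux fl fr p.1 (cAB A B p.1)) *
          deriv (fun y => φ y p.2) p.1)
  timeCont : ∀ (r t₀ : ℝ), 0 ≤ t₀ →
    Tendsto (fun t => ∫ x in Icc (-r) r, |u x t - u x t₀|)
      (nhdsWithin t₀ (Ici 0)) (nhds 0)
  init : ∀ᵐ x : ℝ ∂volume, u x 0 = u0 x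

/-- `AB`-genuine/interface characteristic for the `AB`-entropy solution `sol`,
on the time interval `[0,T]`, where `γ = f_l(A) = f_r(B)`. -/
def IsABgic (T : ℝ) (fl fr : ℝ → ℝ) (γ : ℝ) {A B : ℝ} {u0 : ℝ → ℝ}
    (sol : ABSol fl fr A B u0) (ζ : ℝ → ℝ) : Prop :=
  (∃ K : NNReal, LipschitzOnWith K ζ (Icc 0 T)) ∧
  (∀ᵐ t ∂(volume.restrict (Icc 0 T)),
    (ζ t < 0 → HasDerivAt ζ (deriv fl (sol.um (ζ t) t)) t ∧
      deriv fl (sol.um (ζ t) t) = deriv fl (sol.up (ζ t) t)) ∧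
    (0 < ζ t → HasDerivAt ζ (deriv fr (sol.um (ζ t) t)) t ∧
      deriv fr (sol.um (ζ t) t) = deriv fr (sol.up (ζ t) t)) ∧
    (ζ t = 0 → fl (sol.um 0 t) = γ ∧ fr (sol.up 0 t) = γ))

/-- `C(u,x)`: the set of `AB`-genuine/interface characteristics of `sol`
reaching `x` at time `T`. -/
def charSet (T : ℝ) (fl fr : ℝ → ℝ) (γ : ℝ) {A B : ℝ} {u0 : ℝ → ℝ}
    (sol : ABSol fl fr A B u0) (x : ℝ) : Set (ℝ → ℝ) :=
  {ζ | IsABgic T fl fr γ sol ζ ∧ ζ T = x}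

/-- `C₀(u,x)`: the set of initial positions `ζ(0)` of characteristics in `C(u,x)`. -/
def charSet0 (T : ℝ) (fl fr : ℝ → ℝ) (γ : ℝ) {A B : ℝ} {u0 : ℝ → ℝ}
    (sol : ABSol fl fr A B u0) (x : ℝ) : Set ℝ :=
  (fun ζ : ℝ → ℝ => ζ 0) '' charSet T fl fr γ sol x

/-- Membership in `L^∞(ℝ)`: measurable and (essentially) bounded. -/
def IsLinf (g : ℝ → ℝ) : Prop :=
  Measurable g ∧ ∃ M : ℝ, ∀ᵐ x : ℝ ∂volume, |g x| ≤ M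

/-- `ω ∈ A^{[AB]}(T)`: the profile `ω` is attainable at time `T`. -/
def Attainable (T : ℝ) (fl fr : ℝ → ℝ) (A B : ℝ) (ω : ℝ → ℝ) : Prop :=
  ∃ u0 : ℝ → ℝ, IsLinf u0 ∧
    ∃ sol : ABSol fl fr A B u0, ∀ᵐ x : ℝ ∂volume, sol.u x T = ω x

/-- `I_T^{[AB]}(ω)`: the set of (bounded) initial data whose `AB`-entropy
solution coincides a.e. with `ω` at time `T`. -/
def InitialSet (T : ℝ) (fl fr : ℝ → ℝ) (A B : ℝ) (ω : ℝ → ℝ) : Set (ℝ → ℝ) :=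
  {u0 | IsLinf u0 ∧
    ∃ sol : ABSol fl fr A B u0, ∀ᵐ x : ℝ ∂volume, sol.u x T = ω x}

/-- `x` is a point of continuity of `ω`: the one-sided limits exist and coincide. -/
def ContinuityPt (ω : ℝ → ℝ) (x : ℝ) : Prop :=
  ∃ l : ℝ, Tendsto ω (nhdsWithin x (Iio x)) (nhds l) ∧
    Tendsto ω (nhdsWithin x (Ioi x)) (nhds l)


theorem zero_deriv_ae (H : ℝ → ℝ) :
    ∀ᵐ t : ℝ, H t = 0 → ∀ v, HasDerivAt H v t → v = 0 := by
  have hc := countable_setOfPred_isolated_right_within (s := {t | H t = 0})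
  have := hc.measure_zero volume
  rw [measure_eq_zero_iff_ae_notMem] at this
  filter_upwards [this] with t ht h0 v hv
  simp only [not_and] at ht
  have hne : (nhdsWithin t ({t | H t = 0} ∩ Ioi t)).NeBot := ⟨ht h0⟩
  have h1 := hasDerivAt_iff_tendsto_slope.1 hv
  have h2 : Tendsto (slope H t) (nhdsWithin t ({t | H t = 0} ∩ Ioi t)) (nhds v) :=
    h1.mono_left (nhdsWithin_mono _ (fun y hy => ne_of_gt hy.2))
  have h3 : Tendsto (slope H t) (nhdsWithin t ({t | H t = 0} ∩ Ioi t)) (nhds 0) := by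
    refine tendsto_const_nhds.congr' ?_
    filter_upwards [self_mem_nhdsWithin] with y hy
    have : H y = 0 := hy.1
    simp [slope, this, h0]
  exact tendsto_nhds_unique h2 h3

theorem lip_mono {H : ℝ → ℝ} {K : NNReal} (hH : LipschitzWith K H) {a b : ℝ} (hab : a ≤ b)
    (h : ∀ᵐ t : ℝ, t ∈ Ioo a b → ∀ v, HasDerivAt H v t → 0 ≤ v) : H a ≤ H b := by
  have hac : AbsolutelyContinuousOnInterval H a b :=
    (hH.lipschitzOnWith).absolutelyContinuousOnInterval
  have h1 := hac.integral_deriv_eq_sub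
  have h2 : 0 ≤ ∫ x in a..b, deriv H x := by
    apply intervalIntegral.integral_nonneg_of_ae_restrict hab
    have e : (volume.restrict (Icc a b) : Measure ℝ) = volume.restrict (Ioo a b) :=
      (Measure.restrict_congr_set Ioo_ae_eq_Icc).symm
    rw [e]
    rw [EventuallyLE, ae_restrict_iff' measurableSet_Ioo]
    filter_upwards [h, hH.ae_differentiableAt (μ := volume)] with t ht hd hm
    exact ht hm _ hd.hasDerivAt
  linarith

theorem lip_bound {H : ℝ → ℝ} {K : NNReal} (hH : LipschitzWith K H) {a b : ℝ} {L : NNReal}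
    (h : ∀ᵐ t : ℝ, t ∈ Ioo a b → ∀ v, HasDerivAt H v t → |v| ≤ L) :
    LipschitzOnWith L H (Icc a b) := by
  have key : ∀ x ∈ Icc a b, ∀ y ∈ Icc a b, x ≤ y → |H x - H y| ≤ L * |x - y| := by
    intro x hx y hy hxy
    have hl : LipschitzWith L (fun t : ℝ => (L : ℝ) * t) := by
      apply LipschitzWith.of_dist_le_mul
      intro p q
      simp [Real.dist_eq, ← mul_sub, abs_mul]
    have h1 : (L:ℝ) * x - H x ≤ L * y - H y := lip_mono (hl.sub hH) hxy (by
      filter_upwards [h] with t ht hm v hv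
      have h2 : HasDerivAt H (L - v) t := by
        have := ((hasDerivAt_id t).const_mul (L : ℝ)).sub hv
        refine (this.congr_of_eventuallyEq ?_).congr_deriv (by simp)
        exact Eventually.of_forall (fun s => by simp)
      have := abs_le.1 (ht ⟨by linarith [hm.1, hx.1], by linarith [hm.2, hy.2]⟩ _ h2)
      linarith)
    have h1' : (L:ℝ) * x + H x ≤ L * y + H y := lip_mono (hl.add hH) hxy (by
      filter_upwards [h] with t ht hm v hv
      have h2 : HasDerivAt H (v - L) t := by
        have := hv.sub ((hasDerivAt_id t).const_mul (L : ℝ))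
        refine (this.congr_of_eventuallyEq ?_).congr_deriv (by simp)
        exact Eventually.of_forall (fun s => by simp)
      have := abs_le.1 (ht ⟨by linarith [hm.1, hx.1], by linarith [hm.2, hy.2]⟩ _ h2)
      linarith)
    rw [abs_of_nonpos (sub_nonpos.2 hxy), abs_le]
    constructor <;> linarith
  apply LipschitzOnWith.of_dist_le_mul
  intro x hx y hy
  simp only [Real.dist_eq]
  rcases le_total x y with hxy | hxy
  · exact key x hx y hy hxy
  · rw [abs_sub_comm, abs_sub_comm x]; exact key y hy x hx hxy

theorem dbr {S : Set ℝ} (hS : IsOpen S) (hne : S.Nonempty) (hS' : S.OrdConnected) {h : ℝ → ℝ}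
    (hh : LocallyIntegrableOn h S)
    (ht : ∀ β : ℝ → ℝ, ContDiff ℝ 1 β → ∀ a ∈ S, ∀ b ∈ S, (∀ x, x ∉ Icc a b → β x = 0) →
      ∫ x, h x * deriv β x = 0) :
    ∃ c, ∀ᵐ x : ℝ, x ∈ S → h x = c := by
  obtain ⟨x0, hx0⟩ := hne
  obtain ⟨r, hr, hrS⟩ := Metric.isOpen_iff.1 hS x0 hx0
  let η : ContDiffBump x0 := ⟨r/4, r/2, by positivity, by linarith⟩
  let g0 : ℝ → ℝ := η.normed volume
  have g0s : ∀ x, x ∉ Icc (x0 - r/2) (x0 + r/2) → g0 x = 0 := by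
    intro x hx
    have : x ∉ Function.support g0 := by
      simp only [g0, η.support_normed_eq]
      intro hb
      apply hx
      rw [Real.ball_eq_Ioo] at hb
      exact ⟨hb.1.le, hb.2.le⟩
    simpa using this
  have hm1 : x0 - r/2 ∈ S := hrS (by rw [Real.ball_eq_Ioo]; constructor <;> linarith)
  have hm2 : x0 + r/2 ∈ S := hrS (by rw [Real.ball_eq_Ioo]; constructor <;> linarith)
  have g0c : Continuous g0 := η.continuous_normed
  have g0i : ∫ x, g0 x = 1 := η.integral_normed
  -- key: zero-mean tests
  have key : ∀ g : ℝ → ℝ, Continuous g → ∀ a ∈ S, ∀ b ∈ S, a ≤ b → (∀ x, x ∉ Icc a b → g x = 0) →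
      ∫ x, g x = 0 → ∫ x, h x * g x = 0 := by
    intro g gc a ha b hb hab gs gi
    let β : ℝ → ℝ := fun x => ∫ t in (a-1)..x, g t
    have hd : ∀ x, HasDerivAt β (g x) x := fun x =>
      intervalIntegral.integral_hasDerivAt_right (gc.intervalIntegrable _ _)
        gc.aestronglyMeasurable.stronglyMeasurableAtFilter gc.continuousAt
    have hde : deriv β = g := funext fun x => (hd x).deriv
    have hb1 : ContDiff ℝ 1 β := by
      rw [contDiff_one_iff_deriv]
      exact ⟨fun x => (hd x).differentiableAt, by rw [hde]; exact gc⟩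
    have := ht β hb1 a ha b hb (by
      intro x hx
      simp only [β]
      by_cases hxa : x < a
      · rw [intervalIntegral.integral_congr (g := fun _ => 0)]
        · simp
        · intro t ht
          apply gs
          intro hh
          have := ht.2
          have : t < a := lt_of_le_of_lt ht.2 (by simp [hxa])
          linarith [hh.1]
      · have hxb : b < x := by
          by_contra hcon
          exact hx ⟨not_lt.1 hxa, not_lt.1 hcon⟩
        rw [intervalIntegral.integral_of_le (by linarith)]
        rw [setIntegral_eq_integral_of_forall_compl_eq_zero, gi]
        intro t ht
        apply gs
        intro hh
        exact ht ⟨by linarith [hh.1], by linarith [hh.2]⟩)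
    rwa [hde] at this
  have hloc : ∀ g : ℝ → ℝ, Continuous g → ∀ a ∈ S, ∀ b ∈ S, (∀ x, x ∉ Icc a b → g x = 0) →
      Integrable (fun x => h x * g x) := by
    intro g gc a ha b hb gs
    have h1 : IntegrableOn h (Icc a b) :=
      hh.integrableOn_compact_subset (hS'.out ha hb) isCompact_Icc
    have h2 : IntegrableOn (fun x => h x * g x) (Icc a b) :=
      h1.mul_continuousOn gc.continuousOn isCompact_Icc
    rw [← integrableOn_iff_integrable_of_support_subset (s := Icc a b)]
    · exact h2
    · intro x hx
      by_contra hcon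
      exact hx (by simp [gs x hcon])
  refine ⟨∫ x, h x * g0 x, ?_⟩
  set c := ∫ x, h x * g0 x with hc
  have := hS.ae_eq_zero_of_integral_contDiff_smul_eq_zero (μ := volume) (f := fun x => h x - c)
    (hh.sub (locallyIntegrableOn_const c)) (by
      intro g gd gcs gts
      have gc := gd.continuous
      -- support interval
      obtain ⟨a, ha, b, hb, hab, hg⟩ : ∃ a ∈ S, ∃ b ∈ S, a ≤ b ∧ ∀ x, x ∉ Icc a b → g x = 0 := by
        rcases (tsupport g).eq_empty_or_nonempty with he | hn
        · exact ⟨x0, hx0, x0, hx0, le_rfl, fun x _ => image_eq_zero_of_notMem_tsupport (by simp [he])⟩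
        · obtain ⟨a, ha, ha'⟩ := gcs.isCompact.exists_isLeast hn
          obtain ⟨b, hb, hb'⟩ := gcs.isCompact.exists_isGreatest hn
          refine ⟨a, gts ha, b, gts hb, ha' hb, fun x hx => image_eq_zero_of_notMem_tsupport ?_⟩
          intro hxs
          exact hx ⟨ha' hxs, hb' hxs⟩
      have gint : Integrable g := gc.integrable_of_hasCompactSupport gcs
      have g0int : Integrable g0 := η.integrable_normed
      have hmin : min a (x0 - r/2) ∈ S := by rcases min_choice a (x0-r/2) with h | h <;> rw [h] <;> assumption
      have hmax : max b (x0 + r/2) ∈ S := by rcases max_choice b (x0+r/2) with h | h <;> rw [h] <;> assumption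
      have k := key (fun x => g x - (∫ y, g y) * g0 x) (by fun_prop) _ hmin _ hmax
        ((min_le_left _ _).trans (hab.trans (le_max_left _ _)))
        (by
          intro x hx
          rw [hg x, g0s x]
          · simp
          · intro hh; exact hx ⟨(min_le_right _ _).trans hh.1, hh.2.trans (le_max_right _ _)⟩
          · intro hh; exact hx ⟨(min_le_left _ _).trans hh.1, hh.2.trans (le_max_left _ _)⟩)
        (by rw [integral_sub gint (g0int.const_mul _), integral_const_mul, g0i]; ring)
      have e1 : (fun x => h x * (g x - (∫ y, g y) * g0 x)) =
          fun x => h x * g x - (∫ y, g y) * (h x * g0 x) := by ext; ring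
      have i1 := hloc g gc a ha b hb hg
      have i2 := hloc g0 g0c _ hm1 _ hm2 g0s
      rw [e1, integral_sub i1 (i2.const_mul _), integral_const_mul] at k
      have e2 : (fun x => g x • (h x - c)) = fun x => h x * g x - c * g x := by
        ext; simp; ring
      rw [e2, integral_sub i1 (gint.const_mul _), integral_const_mul]
      linarith)
  filter_upwards [this] with x hx hxS
  linarith [hx hxS]


theorem bdd_locInt {q : ℝ → ℝ} (mq : Measurable q) {M : ℝ} (bq : ∀ x, |q x| ≤ M) :
    LocallyIntegrable q := by
  intro x
  refine ⟨Metric.ball x 1, Metric.ball_mem_nhds _ one_pos, ?_⟩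
  refine Measure.integrableOn_of_bounded (M := M) ?_ mq.aestronglyMeasurable ?_
  · exact (measure_ball_lt_top).ne
  · exact Eventually.of_forall (fun x => by simpa using bq x)

theorem bdd_intInt {q : ℝ → ℝ} (mq : Measurable q) {M : ℝ} (bq : ∀ x, |q x| ≤ M) (a b : ℝ) :
    IntervalIntegrable q volume a b := 
  ((bdd_locInt mq bq).integrableOn_isCompact isCompact_uIcc).intervalIntegrable

theorem prim_lip {q : ℝ → ℝ} (mq : Measurable q) {M : ℝ} (bq : ∀ x, |q x| ≤ M) (c : ℝ) :
    LipschitzWith M.toNNReal (fun x => ∫ t in c..x, q t) := by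
  have hM : 0 ≤ M := (abs_nonneg _).trans (bq 0)
  apply LipschitzWith.of_dist_le_mul
  intro x y
  rw [Real.dist_eq, Real.dist_eq, intervalIntegral.integral_interval_sub_left
    (bdd_intInt mq bq _ _) (bdd_intInt mq bq _ _), Real.coe_toNNReal _ hM]
  have := intervalIntegral.norm_integral_le_of_norm_le_const (a := y) (b := x) (f := q) (C := M)
    (fun t _ => by simpa using bq t)
  simpa using this

theorem supp_compact {β : ℝ → ℝ} {a b : ℝ} (hs : ∀ x, x ∉ Icc a b → β x = 0) :
    HasCompactSupport β := HasCompactSupport.intro isCompact_Icc (fun x hx => hs x hx)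

theorem ibp {q : ℝ → ℝ} (mq : Measurable q) {M : ℝ} (bq : ∀ x, |q x| ≤ M) (c : ℝ)
    {β : ℝ → ℝ} (hβ : ContDiff ℝ 1 β) {a b : ℝ} (hs : ∀ x, x ∉ Icc a b → β x = 0) :
    ∫ x, (∫ t in c..x, q t) * deriv β x = - ∫ x, q x * β x := by
  have hd0 : ∀ x, x ∉ Icc a b → deriv β x = 0 := by
    intro x hx
    have : β =ᶠ[nhds x] fun _ => 0 := by
      filter_upwards [isClosed_Icc.isOpen_compl.mem_nhds hx] with y hy using hs y hy
    rw [this.deriv_eq]; simp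
  set a' := a - 1
  set b' := max a b + 1
  have hab : a' ≤ b' := by simp only [a', b']; linarith [le_max_left a b]
  have hbl : ∀ x, x ∉ Ioc a' b' → x ∉ Icc a b := by
    intro x hx hh
    apply hx
    exact ⟨by simp only [a']; linarith [hh.1], by simp only [b']; linarith [hh.2, le_max_right a b]⟩
  have e1 : ∀ g : ℝ → ℝ, (∀ x, x ∉ Icc a b → g x = 0) → ∫ x, g x = ∫ x in a'..b', g x := by
    intro g hg
    rw [intervalIntegral.integral_of_le hab, setIntegral_eq_integral_of_forall_compl_eq_zero]
    intro x hx
    exact hg x (hbl x hx)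
  rw [e1 _ (fun x hx => by simp [hd0 x hx]), e1 _ (fun x hx => by simp [hs x hx])]
  have ac1 : AbsolutelyContinuousOnInterval (fun x => ∫ t in c..x, q t) a' b' :=
    ((prim_lip mq bq c).lipschitzOnWith).absolutelyContinuousOnInterval
  have ac2 : AbsolutelyContinuousOnInterval β a' b' :=
    (hβ.contDiffOn).absolutelyContinuousOnInterval
  rw [ac1.integral_mul_deriv_eq_deriv_mul ac2]
  have hb0 : β b' = 0 := hs _ (fun hh => by
    have := hh.2; simp only [b'] at this; linarith [le_max_right a b])
  have ha0 : β a' = 0 := hs _ (fun hh => by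
    have := hh.1; simp only [a'] at this; linarith)
  rw [hb0, ha0]
  simp only [mul_zero, sub_zero, zero_sub, neg_inj]
  apply intervalIntegral.integral_congr_ae
  filter_upwards [LocallyIntegrable.ae_hasDerivAt_integral (bdd_locInt mq bq)] with x hx _
  rw [(hx c).deriv]

theorem deriv_supp {β : ℝ → ℝ} {a b : ℝ} (hs : ∀ x, x ∉ Icc a b → β x = 0) :
    ∀ x, x ∉ Icc a b → deriv β x = 0 := by
  intro x hx
  have : β =ᶠ[nhds x] fun _ => 0 := by
    filter_upwards [isClosed_Icc.isOpen_compl.mem_nhds hx] with y hy using hs y hy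
  rw [this.deriv_eq]; simp

theorem prod_int {g : ℝ → ℝ → ℝ} (mg : Measurable (Function.uncurry g)) {M : ℝ}
    (bg : ∀ x t, |g x t| ≤ M) {α β : ℝ → ℝ} (ha : Integrable α) (hb : Integrable β) :
    Integrable (fun p : ℝ × ℝ => g p.1 p.2 * (α p.1 * β p.2)) := by
  have h := ha.mul_prod hb
  exact h.bdd_mul (c := M) (f := fun p : ℝ × ℝ => g p.1 p.2) (mg.aestronglyMeasurable)
    (Eventually.of_forall fun p => by simpa using bg p.1 p.2)

theorem prod_int_eq {g : ℝ → ℝ → ℝ} (mg : Measurable (Function.uncurry g)) {M : ℝ}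
    (bg : ∀ x t, |g x t| ≤ M) {α β : ℝ → ℝ} (ha : Integrable α) (hb : Integrable β) :
    ∫ p : ℝ × ℝ, g p.1 p.2 * (α p.1 * β p.2) = ∫ t, (∫ x, g x t * α x) * β t := by
  have := integral_prod_symm _ (prod_int mg bg ha hb)
  rw [Measure.volume_eq_prod, this]
  congr 1; ext t
  rw [← integral_mul_const]
  congr 1; ext x; simp only; ring

theorem slice_meas {g : ℝ → ℝ → ℝ} (mg : Measurable (Function.uncurry g)) {α : ℝ → ℝ}
    (ha : Continuous α) : Measurable (fun t => ∫ x, g x t * α x) := by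
  have : StronglyMeasurable (fun p : ℝ × ℝ => g p.1 p.2 * α p.1) :=
    (Measurable.mul mg (ha.measurable.comp measurable_fst)).stronglyMeasurable
  exact this.integral_prod_left'.measurable

theorem slice_bdd {g : ℝ → ℝ → ℝ} {M : ℝ}
    (bg : ∀ x t, |g x t| ≤ M) {α : ℝ → ℝ} (ha : Integrable α) (t : ℝ) :
    |∫ x, g x t * α x| ≤ M * ∫ x, |α x| := by
  rw [← integral_const_mul]
  have := norm_integral_le_of_norm_le (f := fun x => g x t * α x) (g := fun x => M * |α x|)
    (μ := volume) (ha.norm.const_mul M) (Eventually.of_forall fun x => by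
      simp only [norm_mul, Real.norm_eq_abs]
      exact mul_le_mul_of_nonneg_right (bg x t) (abs_nonneg _))
  simpa using this

theorem weak_time {u F : ℝ → ℝ → ℝ} (mu : Measurable (Function.uncurry u))
    (mF : Measurable (Function.uncurry F)) {M : ℝ}
    (bu : ∀ x t, |u x t| ≤ M) (bF : ∀ x t, |F x t| ≤ M)
    (weak : ∀ φ : ℝ → ℝ → ℝ,
      ContDiff ℝ 1 (fun p : ℝ × ℝ => φ p.1 p.2) →
      HasCompactSupport (fun p : ℝ × ℝ => φ p.1 p.2) →
      (∀ x t, t ≤ 0 → φ x t = 0) →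
      (∫ p : ℝ × ℝ, (u p.1 p.2 * deriv (fun s => φ p.1 s) p.2 +
        F p.1 p.2 * deriv (fun y => φ y p.2) p.1)) = 0)
    (tc : ∀ (r t₀ : ℝ), 0 ≤ t₀ →
      Tendsto (fun t => ∫ x in Icc (-r) r, |u x t - u x t₀|)
        (nhdsWithin t₀ (Ici 0)) (nhds 0))
    {α : ℝ → ℝ} (hα : ContDiff ℝ 1 α) {a b : ℝ} (hs : ∀ x, x ∉ Icc a b → α x = 0)
    {s t : ℝ} (h0s : 0 < s) (h0t : 0 < t) :
    (∫ x, u x t * α x) - (∫ x, u x s * α x) = ∫ τ in s..t, ∫ x, F x τ * deriv α x := by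
  have aI : Integrable α := hα.continuous.integrable_of_hasCompactSupport (supp_compact hs)
  have dac : Continuous (deriv α) := hα.continuous_deriv le_rfl
  have daI : Integrable (deriv α) :=
    dac.integrable_of_hasCompactSupport (supp_compact (deriv_supp hs))
  set m : ℝ → ℝ := fun t => ∫ x, u x t * α x with hm
  set q : ℝ → ℝ := fun t => ∫ x, F x t * deriv α x with hq
  have mm : Measurable m := slice_meas mu hα.continuous
  have mq : Measurable q := slice_meas mF dac
  have bm : ∀ t, |m t| ≤ M * ∫ x, |α x| := slice_bdd bu aI
  have bq : ∀ t, |q t| ≤ M * ∫ x, |deriv α x| := slice_bdd bF daI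
  have qlip := prim_lip mq bq 1
  -- continuity of m
  have mc : ContinuousOn m (Ioi 0) := by
    intro t0 ht0
    have ht0' : (0:ℝ) < t0 := ht0
    apply ContinuousAt.continuousWithinAt
    obtain ⟨C, hC⟩ := hα.continuous.bounded_above_of_compact_support (supp_compact hs)
    set r := max |a| |b|
    have h1 := (tc r t0 ht0'.le).mono_left (nhdsWithin_mono t0 (Ioi_subset_Ici_self))
    rw [nhdsWithin_eq_nhds.2 (Ioi_mem_nhds ht0')] at h1
    have h2 := h1.const_mul C
    rw [mul_zero] at h2
    rw [ContinuousAt, tendsto_iff_norm_sub_tendsto_zero]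
    refine squeeze_zero (fun _ => norm_nonneg _) (fun t => ?_) h2
    have hi : ∀ t, Integrable (fun x => u x t * α x) := fun t =>
      aI.bdd_mul (c := M) (mu.of_uncurry_right).aestronglyMeasurable
        (Eventually.of_forall fun x => by simpa using bu x t)
    simp only [hm]
    rw [← integral_sub (hi t) (hi t0), ← integral_const_mul]
    rw [← setIntegral_eq_integral_of_forall_compl_eq_zero (s := Icc (-r) r)]
    · refine norm_integral_le_of_norm_le ?_ (Eventually.of_forall fun x => ?_)
      · refine Measure.integrableOn_of_bounded (M := |C| * (M + M)) (by simp) ?_ ?_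
        · have := ((mu.of_uncurry_right (y := t)).sub (mu.of_uncurry_right (y := t0))).abs.const_mul C
          exact this.aestronglyMeasurable
        · refine Eventually.of_forall fun x => ?_
          simp only [norm_mul, Real.norm_eq_abs, abs_abs]
          refine mul_le_mul_of_nonneg_left ?_ (abs_nonneg _)
          exact (abs_sub _ _).trans (add_le_add (bu _ _) (bu _ _))
      · rw [← sub_mul, norm_mul, mul_comm]
        exact mul_le_mul_of_nonneg_right (hC x) (norm_nonneg _)
    · intro x hx
      rw [hs x]
      · simp
      · intro hh
        apply hx
        constructor
        · have := neg_abs_le a; have := le_max_left |a| |b|; have := hh.1; simp only [r]; linarith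
        · have := le_abs_self b; have := le_max_right |a| |b|; have := hh.2; simp only [r]; linarith
  obtain ⟨c, hc⟩ := dbr (S := Ioi 0) isOpen_Ioi ⟨1, by simp⟩ inferInstance
    (h := fun t => m t - ∫ τ in (1:ℝ)..t, q τ)
    ((bdd_locInt mm bm).locallyIntegrableOn _ |>.sub
      (qlip.continuous.locallyIntegrable.locallyIntegrableOn _)) (by
    intro β hβ a' ha' b' hb' hs'
    have bI : Integrable β := hβ.continuous.integrable_of_hasCompactSupport (supp_compact hs')
    have dbc : Continuous (deriv β) := hβ.continuous_deriv le_rfl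
    have dbI : Integrable (deriv β) :=
      dbc.integrable_of_hasCompactSupport (supp_compact (deriv_supp hs'))
    have w := weak (fun x t => α x * β t) (by
        exact (hα.comp contDiff_fst).mul (hβ.comp contDiff_snd))
      (HasCompactSupport.intro (isCompact_Icc.prod isCompact_Icc : IsCompact (Icc a b ×ˢ Icc a' b'))
        (by
          intro p hp
          by_cases h1 : p.1 ∈ Icc a b
          · have h2 : p.2 ∉ Icc a' b' := fun h2 => hp ⟨h1, h2⟩
            simp [hs' _ h2]
          · simp [hs _ h1]))
      (by
        intro x t ht
        rw [hs' t]
        · simp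
        · intro hh
          have : (0:ℝ) < a' := ha'
          linarith [hh.1])
    have e : ∀ p : ℝ × ℝ, (u p.1 p.2 * deriv (fun s => α p.1 * β s) p.2 +
        F p.1 p.2 * deriv (fun y => α y * β p.2) p.1) =
        u p.1 p.2 * (α p.1 * deriv β p.2) + F p.1 p.2 * (deriv α p.1 * β p.2) := by
      intro p
      rw [deriv_const_mul_field, deriv_mul_const_field]
    simp only [e] at w
    rw [integral_add (prod_int mu bu aI dbI) (prod_int mF bF daI bI),
      prod_int_eq mu bu aI dbI, prod_int_eq mF bF daI bI] at w
    have i1 : Integrable (fun x => m x * deriv β x) :=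
      dbI.bdd_mul mm.aestronglyMeasurable (Eventually.of_forall fun x => by simpa using bm x)
    have i2 : Integrable (fun x => (∫ τ in (1:ℝ)..x, q τ) * deriv β x) :=
      (qlip.continuous.mul dbc).integrable_of_hasCompactSupport
        ((supp_compact (deriv_supp hs')).mul_left)
    simp only [sub_mul]
    rw [integral_sub i1 i2, ibp mq bq 1 hβ hs']
    linarith)
  have hE := Measure.eqOn_open_of_ae_eq (μ := volume) (U := Ioi (0:ℝ))
    (f := fun t => m t - ∫ τ in (1:ℝ)..t, q τ) (g := fun _ => c)
    ((ae_restrict_iff' measurableSet_Ioi).2 hc) isOpen_Ioi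
    (mc.sub qlip.continuous.continuousOn) continuousOn_const
  have h1 := hE (show s ∈ Ioi 0 from h0s)
  have h2 := hE (show t ∈ Ioi 0 from h0t)
  simp only at h1 h2
  have h3 := intervalIntegral.integral_interval_sub_left (bdd_intInt mq bq 1 t) (bdd_intInt mq bq 1 s)
  linarith


theorem box_const {u F : ℝ → ℝ → ℝ} (mu : Measurable (Function.uncurry u))
    (mF : Measurable (Function.uncurry F)) {M : ℝ}
    (bu : ∀ x t, |u x t| ≤ M) (bF : ∀ x t, |F x t| ≤ M) {s t : ℝ}
    (wt : ∀ α : ℝ → ℝ, ContDiff ℝ 1 α → ∀ a b, (∀ x, x ∉ Icc a b → α x = 0) →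
      (∫ x, u x t * α x) - (∫ x, u x s * α x) = ∫ τ in s..t, ∫ x, F x τ * deriv α x) :
    ∃ c, ∀ᵐ x : ℝ, (∫ y in (0:ℝ)..x, u y t) - (∫ y in (0:ℝ)..x, u y s)
      + (∫ τ in s..t, F x τ) = c := by
  have mux : ∀ t, Measurable (fun x => u x t) := fun t => mu.of_uncurry_right
  have l1 : ∀ t, Continuous (fun x => ∫ y in (0:ℝ)..x, u y t) := fun t =>
    (prim_lip (mux t) (fun x => bu x t) 0).continuous
  have mI : Measurable (fun x => ∫ τ in s..t, F x τ) := by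
    have h : ∀ I : Set ℝ, Measurable (fun x => ∫ τ in I, F x τ) := fun I =>
      (mF.stronglyMeasurable.integral_prod_right (ν := volume.restrict I)).measurable
    simp only [intervalIntegral]
    exact (h _).sub (h _)
  have bI : ∀ x, |∫ τ in s..t, F x τ| ≤ M * |t - s| := fun x => by
    have := intervalIntegral.norm_integral_le_of_norm_le_const (a := s) (b := t)
      (f := fun τ => F x τ) (C := M) (fun τ _ => by simpa using bF x τ)
    simpa using this
  obtain ⟨c, hc⟩ := dbr (S := univ) isOpen_univ ⟨1, by simp⟩ inferInstance
    (h := fun x => (∫ y in (0:ℝ)..x, u y t) - (∫ y in (0:ℝ)..x, u y s) + (∫ τ in s..t, F x τ))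
    (by
      apply LocallyIntegrable.locallyIntegrableOn
      exact (((l1 t).sub (l1 s)).locallyIntegrable).add (bdd_locInt mI bI)) (by
    intro α hα a _ b _ hs
    have aI : Integrable α := hα.continuous.integrable_of_hasCompactSupport (supp_compact hs)
    have dac : Continuous (deriv α) := hα.continuous_deriv le_rfl
    have dcs := supp_compact (deriv_supp hs)
    have daI : Integrable (deriv α) := dac.integrable_of_hasCompactSupport dcs
    have w := wt α hα a b hs
    have i1 : ∀ t, Integrable (fun x => (∫ y in (0:ℝ)..x, u y t) * deriv α x) := fun t =>
      ((l1 t).mul dac).integrable_of_hasCompactSupport dcs.mul_left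
    have i3 : Integrable (fun x => (∫ τ in s..t, F x τ) * deriv α x) :=
      daI.bdd_mul mI.aestronglyMeasurable (Eventually.of_forall fun x => by simpa using bI x)
    have e : ∀ x, ((∫ y in (0:ℝ)..x, u y t) - (∫ y in (0:ℝ)..x, u y s) + (∫ τ in s..t, F x τ))
        * deriv α x = (∫ y in (0:ℝ)..x, u y t) * deriv α x - (∫ y in (0:ℝ)..x, u y s) * deriv α x
        + (∫ τ in s..t, F x τ) * deriv α x := by intro x; ring
    simp only [e]
    have i12 : Integrable (fun x => (∫ y in (0:ℝ)..x, u y t) * deriv α x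
        - (∫ y in (0:ℝ)..x, u y s) * deriv α x) := (i1 t).sub (i1 s)
    rw [integral_add i12 i3, integral_sub (i1 t) (i1 s),
      ibp (mux t) (fun x => bu x t) 0 hα hs, ibp (mux s) (fun x => bu x s) 0 hα hs]
    have sw : ∫ τ in s..t, ∫ x, F x τ * deriv α x = ∫ x, (∫ τ in s..t, F x τ) * deriv α x := by
      rw [intervalIntegral_integral_swap]
      · congr 1; ext x; rw [intervalIntegral.integral_mul_const]
      · have h1 : Integrable (fun _ : ℝ => (1:ℝ)) (volume.restrict (uIoc s t)) := by
          rw [integrable_const_iff]; right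
          exact ⟨by simp [uIoc]⟩
        have h2 := h1.mul_prod daI
        have h3 := h2.bdd_mul (c := M) (f := fun p : ℝ × ℝ => F p.2 p.1)
          (mF.comp measurable_swap).aestronglyMeasurable
          (Eventually.of_forall fun p => by simpa using bF p.2 p.1)
        refine h3.congr (Eventually.of_forall fun p => ?_)
        simp [Function.uncurry]
    linarith)
  exact ⟨c, by filter_upwards [hc] with x hx using hx trivial⟩

theorem potential {u F : ℝ → ℝ → ℝ} (mu : Measurable (Function.uncurry u))
    (mF : Measurable (Function.uncurry F)) {M : ℝ}
    (bu : ∀ x t, |u x t| ≤ M) (bF : ∀ x t, |F x t| ≤ M)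
    (wt : ∀ s t, 0 < s → 0 < t → 
      ∀ α : ℝ → ℝ, ContDiff ℝ 1 α → ∀ a b, (∀ x, x ∉ Icc a b → α x = 0) →
      (∫ x, u x t * α x) - (∫ x, u x s * α x) = ∫ τ in s..t, ∫ x, F x τ * deriv α x) :
    ∃ (K : NNReal) (U : ℝ × ℝ → ℝ), LipschitzWith K U ∧
      ∀ᵐ p : ℝ × ℝ, 0 < p.2 → HasFDerivAt U (u p.1 p.2 • ContinuousLinearMap.fst ℝ ℝ ℝ
        - F p.1 p.2 • ContinuousLinearMap.snd ℝ ℝ ℝ) p := by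
  have hM : 0 ≤ M := (abs_nonneg _).trans (bu 0 0)
  have mux : ∀ t, Measurable (fun x => u x t) := fun t => mu.of_uncurry_right
  have mFx : ∀ x, Measurable (fun t => F x t) := fun x => mF.of_uncurry_left
  have hbox : ∀ t, ∃ c, 0 < t → ∀ᵐ x : ℝ, (∫ y in (0:ℝ)..x, u y t) - (∫ y in (0:ℝ)..x, u y 1)
      + (∫ τ in (1:ℝ)..t, F x τ) = c := by
    intro t
    by_cases ht : 0 < t
    · obtain ⟨c, hc⟩ := box_const mu mF bu bF (s := 1) (t := t) (wt 1 t one_pos ht)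
      exact ⟨c, fun _ => hc⟩
    · exact ⟨0, fun h => absurd h ht⟩
  choose c hc using hbox
  let U0 : ℝ × ℝ → ℝ := fun p => (∫ y in (0:ℝ)..p.1, u y p.2) - c p.2
  have hU0 : ∀ t, 0 < t → ∀ᵐ x : ℝ, U0 (x, t) = (∫ y in (0:ℝ)..x, u y 1) - ∫ τ in (1:ℝ)..t, F x τ := by
    intro t ht
    filter_upwards [hc t ht] with x hx
    simp only [U0]; linarith
  have lx : ∀ t x y, |U0 (x, t) - U0 (y, t)| ≤ M * |x - y| := by
    intro t x y
    have := (prim_lip (mux t) (fun x => bu x t) 0).dist_le_mul x y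
    rw [Real.dist_eq, Real.dist_eq, Real.coe_toNNReal _ hM] at this
    simpa [U0] using this
  have lt : ∀ t s, 0 < t → 0 < s → ∀ x, |U0 (x, t) - U0 (x, s)| ≤ M * |t - s| := by
    intro t s ht hs x
    have cont : ∀ t, Continuous (fun x => U0 (x, t)) := fun t =>
      (prim_lip (mux t) (fun x => bu x t) 0).continuous.sub (continuous_const (y := c t))
    have hd : Dense {x | |U0 (x, t) - U0 (x, s)| ≤ M * |t - s|} := by
      apply Measure.dense_of_ae (μ := volume)
      filter_upwards [hU0 t ht, hU0 s hs] with x h1 h2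
      have := (prim_lip (mFx x) (fun t => bF x t) 1).dist_le_mul t s
      rw [Real.dist_eq, Real.dist_eq, Real.coe_toNNReal _ hM] at this
      rw [h1, h2, sub_sub_sub_cancel_left, abs_sub_comm]
      exact this
    have hcl : IsClosed {x | |U0 (x, t) - U0 (x, s)| ≤ M * |t - s|} :=
      isClosed_le (((cont t).sub (cont s)).abs) continuous_const
    have : x ∈ closure {x | |U0 (x, t) - U0 (x, s)| ≤ M * |t - s|} := hd x
    rwa [hcl.closure_eq] at this
  have hlip : LipschitzOnWith (2 * M).toNNReal U0 {p | 0 < p.2} := by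
    apply LipschitzOnWith.of_dist_le_mul
    rintro ⟨x, t⟩ ht ⟨y, s⟩ hs
    rw [Real.dist_eq, Real.coe_toNNReal _ (by positivity)]
    have h1 := lx t x y
    have h2 := lt t s ht hs y
    have h3 : |x - y| ≤ dist (x, t) (y, s) := by
      rw [← Real.dist_eq, Prod.dist_eq]; exact le_max_left _ _
    have h4 : |t - s| ≤ dist (x, t) (y, s) := by
      rw [← Real.dist_eq, Prod.dist_eq]; exact le_max_right _ _
    have h5 := abs_sub_le (U0 (x, t)) (U0 (y, t)) (U0 (y, s))
    have h6 := mul_le_mul_of_nonneg_left h3 hM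
    have h7 := mul_le_mul_of_nonneg_left h4 hM
    linarith
  obtain ⟨U, hU, hE⟩ := hlip.extend_real
  refine ⟨_, U, hU, ?_⟩
  have hdiff := hU.ae_differentiableAt (μ := volume)
  have mdiff : MeasurableSet {p | DifferentiableAt ℝ U p} := measurableSet_of_differentiableAt ℝ U
  have mpos : MeasurableSet {p : ℝ × ℝ | 0 < p.2} := measurableSet_lt measurable_const measurable_snd
  have hx : ∀ᵐ p : ℝ × ℝ, 0 < p.2 → DifferentiableAt ℝ U p → fderiv ℝ U p (1, 0) = u p.1 p.2 := by
    have ms : MeasurableSet {p : ℝ × ℝ | 0 < p.2 → DifferentiableAt ℝ U p →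
        fderiv ℝ U p (1, 0) = u p.1 p.2} := 
      mpos.imp (mdiff.imp (measurableSet_eq_fun (measurable_fderiv_apply_const ℝ U _) mu))
    rw [Measure.volume_eq_prod, Measure.ae_prod_iff_ae_ae ms,
      Measure.ae_ae_comm (p := fun x y => 0 < y → DifferentiableAt ℝ U (x, y) →
        fderiv ℝ U (x, y) (1, 0) = u x y) ms]
    refine Eventually.of_forall fun t => ?_
    by_cases ht : 0 < t
    · filter_upwards [LocallyIntegrable.ae_hasDerivAt_integral (bdd_locInt (mux t) (fun x => bu x t))]
        with x hx _ hd
      have h1 : HasDerivAt (fun y => U (y, t)) (u x t) x := by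
        have h2 := (hx 0).sub_const (c t)
        refine h2.congr_of_eventuallyEq (Eventually.of_forall fun y => ?_)
        exact (hE (show (y, t) ∈ {p : ℝ × ℝ | 0 < p.2} from ht)).symm
      have h3 : HasDerivAt (fun y => U (y, t)) (fderiv ℝ U (x, t) (1, 0)) x :=
        hd.hasFDerivAt.comp_hasDerivAt x ((hasDerivAt_id x).prodMk (hasDerivAt_const x t))
      exact h3.unique h1
    · exact Eventually.of_forall fun x h => absurd h ht
  have ht : ∀ᵐ p : ℝ × ℝ, 0 < p.2 → DifferentiableAt ℝ U p → fderiv ℝ U p (0, 1) = - F p.1 p.2 := by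
    have ms : MeasurableSet {p : ℝ × ℝ | 0 < p.2 → DifferentiableAt ℝ U p →
        fderiv ℝ U p (0, 1) = - F p.1 p.2} := 
      mpos.imp (mdiff.imp (measurableSet_eq_fun (measurable_fderiv_apply_const ℝ U _) mF.neg))
    rw [Measure.volume_eq_prod, Measure.ae_prod_iff_ae_ae ms]
    have hq : ∀ᵐ x : ℝ, ∀ r : ℚ, 0 < (r : ℝ) →
        U0 (x, r) = (∫ y in (0:ℝ)..x, u y 1) - ∫ τ in (1:ℝ)..(r:ℝ), F x τ := by
      rw [ae_all_iff]; intro r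
      by_cases hr : 0 < (r : ℝ)
      · filter_upwards [hU0 r hr] with x hx _ using hx
      · exact Eventually.of_forall fun x h => absurd h hr
    filter_upwards [hq] with x hx
    have hall : ∀ t, 0 < t → U (x, t) = (∫ y in (0:ℝ)..x, u y 1) - ∫ τ in (1:ℝ)..t, F x τ := by
      intro t ht
      have hcl : IsClosed {t | U (x, t) = (∫ y in (0:ℝ)..x, u y 1) - ∫ τ in (1:ℝ)..t, F x τ} :=
        isClosed_eq (hU.continuous.comp (by fun_prop))
          (continuous_const.sub (prim_lip (mFx x) (fun t => bF x t) 1).continuous)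
      have h1 := Rat.denseRange_cast (𝕜 := ℝ) |>.open_subset_closure_inter (isOpen_Ioi (a := (0:ℝ))) ht
      refine hcl.closure_subset_iff.2 ?_ h1
      rintro _ ⟨hp, r, rfl⟩
      have := hx r hp
      change U (x, r) = _
      rw [← this]
      exact (hE (show (x, (r:ℝ)) ∈ {p : ℝ × ℝ | 0 < p.2} from hp)).symm
    filter_upwards [LocallyIntegrable.ae_hasDerivAt_integral (bdd_locInt (mFx x) (fun t => bF x t))]
      with t hder ht hd
    have h1 : HasDerivAt (fun s => U (x, s)) (- F x t) t := by
      have h2 := (hder 1).const_sub (∫ y in (0:ℝ)..x, u y 1)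
      refine h2.congr_of_eventuallyEq ?_
      filter_upwards [Ioi_mem_nhds ht] with s hs using hall s hs
    have h3 : HasDerivAt (fun s => U (x, s)) (fderiv ℝ U (x, t) (0, 1)) t :=
      hd.hasFDerivAt.comp_hasDerivAt t ((hasDerivAt_const t x).prodMk (hasDerivAt_id t))
    exact h3.unique h1
  filter_upwards [hdiff, hx, ht] with p h1 h2 h3 hp
  have := h1.hasFDerivAt
  refine this.congr_fderiv ?_
  ext
  · simp [h2 hp h1]
  · simp [h3 hp h1]



theorem shear_ae {P : ℝ × ℝ → Prop} (hP : ∀ᵐ p : ℝ × ℝ, P p) {Z : ℝ → ℝ} (hZ : Measurable Z) :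
    ∀ᵐ y : ℝ, ∀ᵐ t : ℝ, P (Z t + y, t) := by
  have h1 : ∀ᵐ q ∂((volume : Measure ℝ).prod (volume : Measure ℝ)), P q.swap :=
    (Measure.measurePreserving_swap (μ := (volume : Measure ℝ)) (ν := (volume : Measure ℝ))
      ).quasiMeasurePreserving.ae hP
  have hsk : MeasurePreserving (fun q : ℝ × ℝ => (q.1, Z q.1 + q.2))
      ((volume : Measure ℝ).prod (volume : Measure ℝ)) ((volume : Measure ℝ).prod volume) :=
    (MeasurePreserving.id volume).skew_product (g := fun t y => Z t + y)
      ((hZ.comp measurable_fst).add measurable_snd)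
      (Eventually.of_forall fun t => (measurePreserving_add_left volume (Z t)).map_eq)
  have h2 := hsk.quasiMeasurePreserving.ae h1
  have h3 : ∀ᵐ q ∂((volume : Measure ℝ).prod (volume : Measure ℝ)), P (Z q.2 + q.1, q.2) :=
    (Measure.measurePreserving_swap (μ := (volume : Measure ℝ)) (ν := (volume : Measure ℝ))
      ).quasiMeasurePreserving.ae h2
  exact Measure.ae_ae_of_ae_prod h3

theorem curve_deriv {u F : ℝ → ℝ → ℝ} {K : NNReal} {U : ℝ × ℝ → ℝ} (hU : LipschitzWith K U)
    (hFD : ∀ᵐ p : ℝ × ℝ, 0 < p.2 → HasFDerivAt U (u p.1 p.2 • ContinuousLinearMap.fst ℝ ℝ ℝ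
        - F p.1 p.2 • ContinuousLinearMap.snd ℝ ℝ ℝ) p)
    {Z : ℝ → ℝ} {K' : NNReal} (hZ : LipschitzWith K' Z) {S : Set ℝ} (hS : IsOpen S)
    (h0S : (0:ℝ) ∈ closure S) {v w : ℝ → ℝ}
    (hv : ∀ t, 0 < t → Tendsto (fun y => u (Z t + y) t) (nhdsWithin 0 S) (nhds (v t)))
    (hw : ∀ t, 0 < t → Tendsto (fun y => F (Z t + y) t) (nhdsWithin 0 S) (nhds (w t))) :
    ∀ᵐ t : ℝ, 0 < t → HasDerivAt (fun s => U (Z s, s)) (v t * deriv Z t - w t) t := by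
  have hg := shear_ae hFD hZ.continuous.measurable
  have hdense := Measure.dense_of_ae hg
  have hcl := hdense.open_subset_closure_inter hS
  have h0 := closure_minimal hcl isClosed_closure h0S
  obtain ⟨y, hyS, hy0⟩ := mem_closure_iff_seq_limit.1 h0
  have hyT : Tendsto y atTop (nhdsWithin 0 S) :=
    tendsto_nhdsWithin_iff.2 ⟨hy0, Eventually.of_forall fun n => (hyS n).1⟩
  let W : ℕ → ℝ → ℝ := fun n s => U (Z s + y n, s)
  have lipc : ∀ c : ℝ, LipschitzWith (K * max K' 1) (fun s => U (Z s + c, s)) := by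
    intro c
    have h1 : LipschitzWith K' (fun s => Z s + c) := by
      apply LipschitzWith.of_dist_le_mul
      intro a b
      simpa using hZ.dist_le_mul a b
    exact hU.comp (h1.prodMk LipschitzWith.id)
  have Wlip : ∀ n, LipschitzWith (K * max K' 1) (W n) := fun n => lipc (y n)
  let I : ℝ → ℝ := (Ioi 0).indicator (fun t => v t * deriv Z t - w t)
  let D : ℕ → ℝ → ℝ := fun n => (Ioi 0).indicator (deriv (W n))
  have hder : ∀ᵐ t : ℝ, ∀ n, 0 < t → deriv (W n) t =
      u (Z t + y n) t * deriv Z t - F (Z t + y n) t := by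
    rw [ae_all_iff]; intro n
    filter_upwards [(hyS n).2, hZ.ae_differentiableAt (μ := volume)] with t h1 h2 ht
    have h4 : HasDerivAt (W n) _ t := HasFDerivAt.comp_hasDerivAt (l := U)
      (f := fun s => (Z s + y n, s)) t (h1 ht)
      ((h2.hasDerivAt.add_const (y n)).prodMk (hasDerivAt_id t))
    rw [h4.deriv]; simp
  have hlim : ∀ᵐ t : ℝ, Tendsto (fun n => D n t) atTop (nhds (I t)) := by
    filter_upwards [hder] with t ht
    by_cases h : 0 < t
    · have e : ∀ n, D n t = u (Z t + y n) t * deriv Z t - F (Z t + y n) t := by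
        intro n
        simp only [D, indicator_of_mem (show t ∈ Ioi (0:ℝ) from h)]
        exact ht n h
      simp only [e, I, indicator_of_mem (show t ∈ Ioi (0:ℝ) from h)]
      exact (((hv t h).comp hyT).mul_const _).sub ((hw t h).comp hyT)
    · have hn : t ∉ Ioi (0:ℝ) := h
      simp [D, I, indicator_of_notMem hn]
  have Dm : ∀ n, Measurable (D n) := fun n => (measurable_deriv (W n)).indicator measurableSet_Ioi
  set C : ℝ := ((K * max K' 1 : NNReal) : ℝ) with hC
  have Db : ∀ n t, ‖D n t‖ ≤ C := by
    intro n t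
    refine (norm_indicator_le_norm_self _ _).trans ?_
    exact norm_deriv_le_of_lipschitz (Wlip n)
  have Im : AEStronglyMeasurable I volume :=
    aestronglyMeasurable_of_tendsto_ae atTop (fun n => (Dm n).aestronglyMeasurable) hlim
  have Ib : ∀ᵐ t : ℝ, ‖I t‖ ≤ C := by
    filter_upwards [hlim] with t ht
    exact le_of_tendsto ht.norm (Eventually.of_forall fun n => Db n t)
  have Il : LocallyIntegrable I := by
    intro x
    refine ⟨Metric.ball x 1, Metric.ball_mem_nhds _ one_pos, ?_⟩
    exact Measure.integrableOn_of_bounded (M := C) (measure_ball_lt_top).ne Im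
      (ae_restrict_of_ae Ib)
  have hint : ∀ t, 0 < t → U (Z t, t) = U (Z 1, 1) + ∫ s in (1:ℝ)..t, I s := by
    intro t ht
    have h1 : Tendsto (fun n => ∫ s in (1:ℝ)..t, D n s) atTop (nhds (∫ s in (1:ℝ)..t, I s)) := by
      apply intervalIntegral.tendsto_integral_filter_of_dominated_convergence (fun _ => C)
      · exact Eventually.of_forall fun n => (Dm n).aestronglyMeasurable
      · exact Eventually.of_forall fun n => Eventually.of_forall fun s _ => Db n s
      · exact intervalIntegrable_const
      · filter_upwards [hlim] with s hs _ using hs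
    have h2 : ∀ n, ∫ s in (1:ℝ)..t, D n s = W n t - W n 1 := by
      intro n
      have hac : AbsolutelyContinuousOnInterval (W n) 1 t :=
        ((Wlip n).lipschitzOnWith).absolutelyContinuousOnInterval
      rw [← hac.integral_deriv_eq_sub]
      apply intervalIntegral.integral_congr
      intro s hs
      have : s ∈ Ioi (0:ℝ) := lt_of_lt_of_le (lt_min one_pos ht) hs.1
      simp only [D, indicator_of_mem this]
    simp only [h2] at h1
    have h3 : ∀ t, Tendsto (fun n => W n t) atTop (nhds (U (Z t, t))) := by
      intro t
      have : Tendsto (fun n => (Z t + y n, t)) atTop (nhds (Z t, t)) := by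
        have := (hy0.const_add (Z t)).prodMk_nhds (tendsto_const_nhds (x := t))
        simpa using this
      exact (hU.continuous.tendsto _).comp this
    have h4 := tendsto_nhds_unique h1 ((h3 t).sub (h3 1))
    linarith
  filter_upwards [LocallyIntegrable.ae_hasDerivAt_integral Il] with t hd ht
  have h1 := (hd 1).const_add (U (Z 1, 1))
  have e : I t = v t * deriv Z t - w t := indicator_of_mem (show t ∈ Ioi (0:ℝ) from ht) _
  rw [e] at h1
  refine h1.congr_of_eventuallyEq ?_
  filter_upwards [Ioi_mem_nhds ht] with s hs using hint s hs


theorem scaled_lim {q : ℝ → ℝ} (mq : Measurable q) {M : ℝ} (bq : ∀ x, |q x| ≤ M) {qm qp : ℝ}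
    (hm : Tendsto q (nhdsWithin 0 (Iio 0)) (nhds qm))
    (hp : Tendsto q (nhdsWithin 0 (Ioi 0)) (nhds qp))
    {α : ℝ → ℝ} (hα : ContDiff ℝ 1 α) (hc : HasCompactSupport α) (h1 : α 0 = 1) :
    Tendsto (fun n : ℕ => ∫ x, q x * (((n:ℝ)+1) * deriv α (((n:ℝ)+1) * x))) atTop
      (nhds (qm - qp)) := by
  have hd : Continuous (deriv α) := hα.continuous_deriv le_rfl
  have hdi : Integrable (deriv α) := hd.integrable_of_hasCompactSupport hc.deriv
  have e : ∀ n : ℕ, ∫ x, q x * (((n:ℝ)+1) * deriv α (((n:ℝ)+1) * x)) =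
      ∫ z, q (z / ((n:ℝ)+1)) * deriv α z := by
    intro n
    have hn : (0:ℝ) < (n:ℝ)+1 := by positivity
    have := Measure.integral_comp_mul_left (fun z => q (z / ((n:ℝ)+1)) * deriv α z) ((n:ℝ)+1)
    rw [abs_of_pos (by positivity), smul_eq_mul] at this
    have h2 : ∀ x, q x * (((n:ℝ)+1) * deriv α (((n:ℝ)+1) * x)) = ((n:ℝ)+1) *
        (q ((((n:ℝ)+1) * x) / ((n:ℝ)+1)) * deriv α (((n:ℝ)+1) * x)) := by
      intro x
      rw [mul_div_cancel_left₀ _ hn.ne']; ring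
    simp_rw [h2]
    rw [integral_const_mul, this, ← mul_assoc, mul_inv_cancel₀ hn.ne', one_mul]
  simp_rw [e]
  let g : ℝ → ℝ := fun z => (if z < 0 then qm else qp) * deriv α z
  have hg : ∫ z, g z = qm - qp := by
    rw [← integral_add_compl (measurableSet_Iic (a := (0:ℝ)))]
    · have a1 : ∫ z in Iic (0:ℝ), g z = ∫ z in Iic (0:ℝ), qm * deriv α z := by
        rw [integral_Iic_eq_integral_Iio, integral_Iic_eq_integral_Iio]
        apply setIntegral_congr_fun measurableSet_Iio
        intro z hz
        simp only [g, if_pos (show z < 0 from hz)]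
      have a2 : ∫ z in Ioi (0:ℝ), g z = ∫ z in Ioi (0:ℝ), qp * deriv α z := by
        apply setIntegral_congr_fun measurableSet_Ioi
        intro z hz
        simp only [g, if_neg (show ¬ z < 0 from not_lt.2 (le_of_lt hz))]
      rw [compl_Iic, a1, a2, integral_const_mul, integral_const_mul,
        hc.integral_Iic_deriv_eq hα, hc.integral_Ioi_deriv_eq hα, h1]
      ring
    · refine hdi.bdd_mul (c := max |qm| |qp|) ?_ ?_
      · exact (Measurable.ite measurableSet_Iio measurable_const
          measurable_const).aestronglyMeasurable
      · refine Eventually.of_forall fun z => ?_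
        split_ifs
        · exact le_max_left _ _
        · exact le_max_right _ _
  rw [← hg]
  have h0 : ∀ z : ℝ, Tendsto (fun n : ℕ => z / ((n:ℝ)+1)) atTop (nhds 0) := fun z =>
    tendsto_const_nhds.div_atTop (tendsto_natCast_atTop_atTop.atTop_add tendsto_const_nhds)
  apply tendsto_integral_of_dominated_convergence (fun z => M * |deriv α z|)
  · intro n
    exact ((mq.comp (measurable_id.div_const _)).mul hd.measurable).aestronglyMeasurable
  · exact hdi.norm.const_mul M
  · intro n
    refine Eventually.of_forall fun z => ?_
    rw [norm_mul]
    exact mul_le_mul_of_nonneg_right (bq _) (abs_nonneg _)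
  · have hne : ∀ᵐ z : ℝ, z ≠ 0 := by simp [ae_iff]
    filter_upwards [hne] with z hz
    refine Tendsto.mul_const _ ?_
    rcases lt_or_gt_of_ne hz with h | h
    · simp only [if_pos h]
      refine hm.comp (tendsto_nhdsWithin_iff.2 ⟨h0 z, Eventually.of_forall fun n => ?_⟩)
      exact div_neg_of_neg_of_pos h (by positivity)
    · simp only [if_neg (not_lt.2 h.le)]
      refine hp.comp (tendsto_nhdsWithin_iff.2 ⟨h0 z, Eventually.of_forall fun n => ?_⟩)
      exact div_pos h (by positivity)

theorem interface_ineq {E Q : ℝ → ℝ → ℝ} (mE : Measurable (Function.uncurry E))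
    (mQ : Measurable (Function.uncurry Q)) {M : ℝ}
    (bE : ∀ x t, |E x t| ≤ M) (bQ : ∀ x t, |Q x t| ≤ M)
    (ent : ∀ φ : ℝ → ℝ → ℝ,
      ContDiff ℝ 1 (fun p : ℝ × ℝ => φ p.1 p.2) →
      HasCompactSupport (fun p : ℝ × ℝ => φ p.1 p.2) →
      (∀ x t, 0 ≤ φ x t) →
      (∀ x t, t ≤ 0 → φ x t = 0) →
      0 ≤ (∫ p : ℝ × ℝ, (E p.1 p.2 * deriv (fun s => φ p.1 s) p.2 +
        Q p.1 p.2 * deriv (fun y => φ y p.2) p.1)))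
    {Qm Qp : ℝ → ℝ}
    (hm : ∀ t, 0 < t → Tendsto (fun y => Q y t) (nhdsWithin 0 (Iio 0)) (nhds (Qm t)))
    (hp : ∀ t, 0 < t → Tendsto (fun y => Q y t) (nhdsWithin 0 (Ioi 0)) (nhds (Qp t))) :
    ∀ᵐ t : ℝ, 0 < t → Qp t ≤ Qm t := by
  let α : ContDiffBump (0:ℝ) := ⟨1, 2, one_pos, one_lt_two⟩
  have hα : ContDiff ℝ 1 α := α.contDiff
  have hc : HasCompactSupport α := α.hasCompactSupport
  have h1 : α 0 = 1 := α.one_of_mem_closedBall (by simp [α])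
  have hd : Continuous (deriv α) := hα.continuous_deriv le_rfl
  have hdi : Integrable (deriv α) := hd.integrable_of_hasCompactSupport hc.deriv
  have hαi : Integrable α := hα.continuous.integrable_of_hasCompactSupport hc
  let αn : ℕ → ℝ → ℝ := fun n x => α (((n:ℝ)+1) * x)
  have hαn : ∀ n, ContDiff ℝ 1 (αn n) := fun n => hα.comp (contDiff_const.mul contDiff_id)
  have hderiv : ∀ n x, deriv (αn n) x = ((n:ℝ)+1) * deriv α (((n:ℝ)+1) * x) := by
    intro n x
    have := ((hα.differentiable one_ne_zero (((n:ℝ)+1) * x)).hasDerivAt).comp x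
      ((hasDerivAt_id x).const_mul ((n:ℝ)+1))
    have h2 : HasDerivAt (αn n) _ x := this
    rw [h2.deriv]; simp; ring
  have hn0 : ∀ n : ℕ, ((n:ℝ)+1) ≠ 0 := fun n => by positivity
  have hαni : ∀ n, Integrable (αn n) := fun n => hαi.comp_mul_left' (hn0 n)
  have hdni : ∀ n, Integrable (deriv (αn n)) := by
    intro n
    have : deriv (αn n) = fun x => ((n:ℝ)+1) * deriv α (((n:ℝ)+1) * x) := funext (hderiv n)
    rw [this]
    exact (hdi.comp_mul_left' (hn0 n)).const_mul _
  have hcn : ∀ n, HasCompactSupport (αn n) := fun n =>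
    hc.comp_homeomorph (Homeomorph.mulLeft₀ ((n:ℝ)+1) (hn0 n))
  have hint : ∀ n, ∫ x, |αn n x| = ((n:ℝ)+1)⁻¹ * ∫ x, |α x| := by
    intro n
    have := Measure.integral_comp_mul_left (fun z => |α z|) ((n:ℝ)+1)
    rw [abs_of_pos (by positivity), smul_eq_mul] at this
    exact this
  have hintd : ∀ n, ∫ x, |deriv (αn n) x| = ∫ x, |deriv α x| := by
    intro n
    have := Measure.integral_comp_mul_left (fun z => |deriv α z|) ((n:ℝ)+1)
    rw [abs_of_pos (by positivity), smul_eq_mul] at this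
    simp_rw [hderiv, abs_mul]
    rw [integral_const_mul, this, abs_of_pos (by positivity), ← mul_assoc,
      mul_inv_cancel₀ (hn0 n), one_mul]
  let J : ℕ → ℝ → ℝ := fun n t => ∫ x, Q x t * deriv (αn n) x
  have Jm : ∀ n, Measurable (J n) := fun n => slice_meas mQ ((hαn n).continuous_deriv le_rfl)
  have Jb : ∀ n t, |J n t| ≤ M * ∫ x, |deriv α x| := by
    intro n t
    have := slice_bdd bQ (hdni n) t
    rwa [hintd n] at this
  have Jl : ∀ t, 0 < t → Tendsto (fun n => J n t) atTop (nhds (Qm t - Qp t)) := by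
    intro t ht
    have := scaled_lim (q := fun x => Q x t) mQ.of_uncurry_right (fun x => bQ x t) (hm t ht)
      (hp t ht) hα hc h1
    simp only [J, hderiv]
    exact this
  have key : ∀ β : ℝ → ℝ, ContDiff ℝ 1 β → HasCompactSupport β → (∀ t, 0 ≤ β t) →
      (∀ t, t ≤ 0 → β t = 0) → 0 ≤ ∫ t, (Qm t - Qp t) * β t := by
    intro β hβ hβc hβ0 hβs
    have hβi : Integrable β := hβ.continuous.integrable_of_hasCompactSupport hβc
    have hβdi : Integrable (deriv β) :=
      (hβ.continuous_deriv le_rfl).integrable_of_hasCompactSupport hβc.deriv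
    have hb : ∀ n : ℕ, -(M * (((n:ℝ)+1)⁻¹ * ∫ x, |α x|) * ∫ t, |deriv β t|) ≤ ∫ t, J n t * β t := by
      intro n
      have h2 := ent (fun x t => αn n x * β t)
        (((hαn n).comp contDiff_fst).mul (hβ.comp contDiff_snd))
        (by
          apply HasCompactSupport.intro ((hcn n).isCompact.prod hβc.isCompact)
          intro p hp
          simp only [mem_prod, not_and_or] at hp
          rcases hp with hp | hp
          · rw [image_eq_zero_of_notMem_tsupport hp, zero_mul]
          · rw [image_eq_zero_of_notMem_tsupport hp, mul_zero])
        (fun x t => mul_nonneg α.nonneg (hβ0 t))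
        (fun x t ht => by rw [hβs t ht, mul_zero])
      have e1 : ∀ p : ℝ × ℝ, E p.1 p.2 * deriv (fun s => αn n p.1 * β s) p.2 +
          Q p.1 p.2 * deriv (fun y => αn n y * β p.2) p.1 =
          E p.1 p.2 * (αn n p.1 * deriv β p.2) + Q p.1 p.2 * (deriv (αn n) p.1 * β p.2) := by
        intro p
        rw [deriv_const_mul_field, deriv_mul_const_field]
      simp only [e1] at h2
      rw [integral_add (prod_int mE bE (hαni n) hβdi) (prod_int mQ bQ (hdni n) hβi),
        prod_int_eq mE bE (hαni n) hβdi, prod_int_eq mQ bQ (hdni n) hβi] at h2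
      have h3 : |∫ t, (∫ x, E x t * αn n x) * deriv β t| ≤
          (M * (((n:ℝ)+1)⁻¹ * ∫ x, |α x|)) * ∫ t, |deriv β t| := by
        rw [← integral_const_mul, ← Real.norm_eq_abs]
        refine norm_integral_le_of_norm_le (hβdi.norm.const_mul _)
          (Eventually.of_forall fun t => ?_)
        rw [norm_mul]
        refine mul_le_mul_of_nonneg_right ?_ (abs_nonneg _)
        have := slice_bdd bE (hαni n) t
        rwa [hint n] at this
      have h4 := (abs_le.1 h3).2
      change 0 ≤ _ + ∫ t, J n t * β t at h2
      linarith
    have l1 : Tendsto (fun n : ℕ => -(M * (((n:ℝ)+1)⁻¹ * ∫ x, |α x|) * ∫ t, |deriv β t|)) atTop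
        (nhds 0) := by
      have h0 : Tendsto (fun n : ℕ => ((n:ℝ)+1)⁻¹) atTop (nhds 0) :=
        (tendsto_natCast_atTop_atTop.atTop_add tendsto_const_nhds).inv_tendsto_atTop
      have := (((h0.mul_const (∫ x, |α x|)).const_mul M).mul_const (∫ t, |deriv β t|)).neg
      simpa using this
    have l2 : Tendsto (fun n : ℕ => ∫ t, J n t * β t) atTop (nhds (∫ t, (Qm t - Qp t) * β t)) := by
      apply tendsto_integral_of_dominated_convergence (fun t => (M * ∫ x, |deriv α x|) * |β t|)
      · intro n
        exact ((Jm n).mul hβ.continuous.measurable).aestronglyMeasurable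
      · exact hβi.norm.const_mul _
      · intro n
        refine Eventually.of_forall fun t => ?_
        rw [norm_mul]
        exact mul_le_mul_of_nonneg_right (Jb n t) (abs_nonneg _)
      · refine Eventually.of_forall fun t => ?_
        by_cases h : 0 < t
        · exact (Jl t h).mul_const _
        · simp [hβs t (not_lt.1 h)]
    exact le_of_tendsto_of_tendsto' l1 l2 hb
  let g : ℝ → ℝ := (Ioi 0).indicator (fun t => Qm t - Qp t)
  have glim : ∀ t, Tendsto (fun n => (Ioi 0).indicator (J n) t) atTop (nhds (g t)) := by
    intro t
    by_cases h : t ∈ Ioi (0:ℝ)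
    · simp only [g, indicator_of_mem h]; exact Jl t h
    · simp only [g, indicator_of_notMem h]; exact tendsto_const_nhds
  have gm : Measurable g := measurable_of_tendsto_metrizable
    (fun n => (Jm n).indicator measurableSet_Ioi) (tendsto_pi_nhds.2 glim)
  have gb : ∀ t, |g t| ≤ M * ∫ x, |deriv α x| := by
    intro t
    refine le_of_tendsto (glim t).norm (Eventually.of_forall fun n => ?_)
    exact (norm_indicator_le_norm_self _ _).trans (Jb n t)
  have gl := bdd_locInt gm gb
  let ψ : ℕ → ContDiffBump (0:ℝ) := fun n => ⟨((n:ℝ)+1)⁻¹, 2 * ((n:ℝ)+1)⁻¹, by positivity, by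
    have : (0:ℝ) < ((n:ℝ)+1)⁻¹ := by positivity
    linarith⟩
  have h0 : Tendsto (fun n : ℕ => 2 * ((n:ℝ)+1)⁻¹) atTop (nhds 0) := by
    have := (tendsto_natCast_atTop_atTop (R := ℝ).atTop_add (tendsto_const_nhds
      (x := (1:ℝ)))).inv_tendsto_atTop.const_mul 2
    simpa using this
  have conv := ContDiffBump.ae_convolution_tendsto_right_of_locallyIntegrable (μ := volume)
    (φ := ψ) (l := atTop) (K := 2) h0 (Eventually.of_forall fun n => le_rfl) gl
  filter_upwards [conv] with t ht h
  have gt : g t = Qm t - Qp t := indicator_of_mem (show t ∈ Ioi (0:ℝ) from h) _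
  suffices 0 ≤ g t by linarith
  refine ge_of_tendsto ht ?_
  filter_upwards [h0.eventually_lt_const h] with n hn
  rw [convolution_eq_swap]
  have h5 := key (fun s => (ψ n).normed volume (t - s))
    ((ψ n).contDiff_normed.comp (contDiff_const.sub contDiff_id))
    ((ψ n).hasCompactSupport_normed.comp_homeomorph (Homeomorph.subLeft t))
    (fun s => (ψ n).nonneg_normed _)
    (by
      intro s hs
      have : t - s ∉ Function.support ((ψ n).normed volume) := by
        rw [(ψ n).support_normed_eq, Metric.mem_ball, dist_zero_right, Real.norm_eq_abs, not_lt]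
        refine le_trans ?_ (le_abs_self _)
        change 2 * ((n:ℝ)+1)⁻¹ ≤ _
        linarith
      simpa using this)
  refine h5.trans_eq ?_
  apply integral_congr_ae
  refine Eventually.of_forall fun s => ?_
  simp only [ContinuousLinearMap.lsmul_apply, smul_eq_mul]
  by_cases hs : s ∈ Ioi (0:ℝ)
  · simp only [g, indicator_of_mem hs]; ring
  · simp only [g, indicator_of_notMem hs, mul_zero]
    have : t - s ∉ Function.support ((ψ n).normed volume) := by
      rw [(ψ n).support_normed_eq, Metric.mem_ball, dist_zero_right, Real.norm_eq_abs, not_lt]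
      refine le_trans ?_ (le_abs_self _)
      change 2 * ((n:ℝ)+1)⁻¹ ≤ _
      have : s ≤ 0 := not_lt.1 hs
      linarith
    have h6 : (ψ n).normed volume (t - s) = 0 := by simpa using this
    rw [h6]; ring


theorem tangent {f : ℝ → ℝ} {a : ℝ} (hf : ContDiff ℝ 2 f) (ha : 0 < a)
    (h2 : ∀ w, a ≤ deriv (deriv f) w) (q p : ℝ) : f q + deriv f q * (p - q) ≤ f p := by
  have hd : Differentiable ℝ f := hf.differentiable (by norm_num)
  have hm : StrictMono (deriv f) := strictMono_of_deriv_pos (fun w => ha.trans_le (h2 w))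
  have hc : ConvexOn ℝ univ f := hm.monotone.convexOn_univ_of_deriv hd
  rcases lt_trichotomy p q with h | h | h
  · have := hc.slope_le_deriv (mem_univ p) (mem_univ q) h (hd q)
    rw [slope_def_field, div_le_iff₀ (by linarith)] at this
    linarith
  · subst h; simp
  · have := hc.deriv_le_slope (mem_univ q) (mem_univ p) h (hd q)
    rw [slope_def_field, le_div_iff₀ (by linarith)] at this
    linarith

theorem meas_sign : Measurable Real.sign := by
  have : Real.sign = fun r => if r < 0 then (-1:ℝ) else if 0 < r then 1 else 0 := by
    ext r; rfl
  rw [this]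
  exact Measurable.ite measurableSet_Iio measurable_const
    (Measurable.ite measurableSet_Ioi measurable_const measurable_const)

theorem abs_sign_le (r : ℝ) : |Real.sign r| ≤ 1 := by
  rcases Real.sign_apply_eq r with h | h | h <;> rw [h] <;> norm_num

theorem cont_S {f : ℝ → ℝ} (hf : Continuous f) (k : ℝ) :
    Continuous (fun v => Real.sign (v - k) * (f v - f k)) := by
  have e : (fun v => Real.sign (v - k) * (f v - f k)) =
      fun v => f (max v k) - f (min v k) := by
    ext v
    rcases lt_trichotomy v k with h | h | h
    · rw [Real.sign_of_neg (by linarith), max_eq_right h.le, min_eq_left h.le]; ring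
    · subst h; simp
    · rw [Real.sign_of_pos (by linarith), max_eq_left h.le, min_eq_right h.le]; ring
  rw [e]; fun_prop

theorem meas_dflux {fl fr : ℝ → ℝ} (hl : Continuous fl) (hr : Continuous fr) {g : ℝ × ℝ → ℝ}
    (hg : Measurable g) : Measurable (fun p : ℝ × ℝ => dflux fl fr p.1 (g p)) := by
  unfold dflux
  exact Measurable.ite (measurable_fst measurableSet_Iio) (hl.measurable.comp hg)
    (hr.measurable.comp hg)

theorem meas_cAB (A B : ℝ) : Measurable (cAB A B) := by
  unfold cAB
  exact Measurable.ite measurableSet_Iic measurable_const measurable_const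

section
variable {fl fr : ℝ → ℝ} {A B : ℝ} {u0 : ℝ → ℝ}

theorem flux_bdd {f : ℝ → ℝ} (hf : Continuous f) (M : ℝ) : ∃ N, ∀ v, |v| ≤ M → |f v| ≤ N := by
  obtain ⟨N, hN⟩ := (isCompact_Icc (a := -M) (b := M)).exists_bound_of_continuousOn
    hf.continuousOn
  exact ⟨N, fun v hv => hN v (abs_le.1 hv)⟩

theorem sol_bdd (hl : Continuous fl) (hr : Continuous fr) (sol : ABSol fl fr A B u0) :
    ∃ M, |A| ≤ M ∧ |B| ≤ M ∧ (∀ x t, |sol.u x t| ≤ M) ∧ ∀ x v, (∃ y t, sol.u y t = v) ∨ v = A ∨ v = B → 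
      |dflux fl fr x v| ≤ M := by
  obtain ⟨M, hM⟩ := sol.bdd
  set M0 := max M (max |A| |B|)
  obtain ⟨N1, h1⟩ := flux_bdd hl M0
  obtain ⟨N2, h2⟩ := flux_bdd hr M0
  have hA : |A| ≤ M0 := (le_max_left _ _).trans (le_max_right _ _)
  have hB : |B| ≤ M0 := (le_max_right _ _).trans (le_max_right _ _)
  refine ⟨max M0 (max N1 N2), hA.trans (le_max_left _ _), hB.trans (le_max_left _ _),
    fun x t => (hM x t).trans ((le_max_left _ _).trans (le_max_left _ _)), ?_⟩
  intro x v hv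
  have hv' : |v| ≤ M0 := by
    rcases hv with ⟨y, t, rfl⟩ | rfl | rfl
    · exact (hM y t).trans (le_max_left _ _)
    · exact hA
    · exact hB
  unfold dflux
  split_ifs
  · exact (h1 v hv').trans ((le_max_left _ _).trans (le_max_right _ _))
  · exact (h2 v hv').trans ((le_max_right _ _).trans (le_max_right _ _))

theorem shift_lim {g : ℝ → ℝ} {z l : ℝ} (h : Tendsto g (nhdsWithin z (Iio z)) (nhds l)) :
    Tendsto (fun y => g (z + y)) (nhdsWithin 0 (Iio 0)) (nhds l) := by
  refine h.comp (tendsto_nhdsWithin_iff.2 ⟨?_, ?_⟩)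
  · have : Tendsto (fun y => z + y) (nhds 0) (nhds (z + 0)) := (continuous_const.add continuous_id).tendsto 0
    rw [add_zero] at this
    exact this.mono_left nhdsWithin_le_nhds
  · filter_upwards [self_mem_nhdsWithin] with y hy
    have : y < 0 := hy
    simp [this]

theorem shift_lim' {g : ℝ → ℝ} {z l : ℝ} (h : Tendsto g (nhdsWithin z (Ioi z)) (nhds l)) :
    Tendsto (fun y => g (z + y)) (nhdsWithin 0 (Ioi 0)) (nhds l) := by
  refine h.comp (tendsto_nhdsWithin_iff.2 ⟨?_, ?_⟩)
  · have : Tendsto (fun y => z + y) (nhds 0) (nhds (z + 0)) := (continuous_const.add continuous_id).tendsto 0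
    rw [add_zero] at this
    exact this.mono_left nhdsWithin_le_nhds
  · filter_upwards [self_mem_nhdsWithin] with y hy
    have : 0 < y := hy
    simp [this]

theorem dflux_lim_l (hl : Continuous fl) (hr : Continuous fr) {g : ℝ → ℝ} {z l : ℝ}
    (h : Tendsto g (nhdsWithin z (Iio z)) (nhds l)) :
    Tendsto (fun y => dflux fl fr y (g y)) (nhdsWithin z (Iio z))
      (nhds (if z ≤ 0 then fl l else fr l)) := by
  split_ifs with hz
  · refine ((hl.tendsto l).comp h).congr' ?_
    filter_upwards [self_mem_nhdsWithin] with y hy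
    have : y < 0 := lt_of_lt_of_le hy hz
    simp [dflux, this]
  · refine ((hr.tendsto l).comp h).congr' ?_
    filter_upwards [mem_nhdsWithin_of_mem_nhds (Ioi_mem_nhds (not_le.1 hz))] with y hy
    have : ¬ y < 0 := not_lt.2 (le_of_lt hy)
    simp [dflux, this]

theorem dflux_lim_r (hl : Continuous fl) (hr : Continuous fr) {g : ℝ → ℝ} {z l : ℝ}
    (h : Tendsto g (nhdsWithin z (Ioi z)) (nhds l)) :
    Tendsto (fun y => dflux fl fr y (g y)) (nhdsWithin z (Ioi z))
      (nhds (if z < 0 then fl l else fr l)) := by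
  split_ifs with hz
  · refine ((hl.tendsto l).comp h).congr' ?_
    filter_upwards [mem_nhdsWithin_of_mem_nhds (Iio_mem_nhds hz)] with y hy
    have : y < 0 := hy
    simp [dflux, this]
  · refine ((hr.tendsto l).comp h).congr' ?_
    filter_upwards [self_mem_nhdsWithin] with y hy
    have : ¬ y < 0 := not_lt.2 ((not_lt.1 hz).trans (le_of_lt hy))
    simp [dflux, this]

theorem sol_pot (hl : Continuous fl) (hr : Continuous fr) (sol : ABSol fl fr A B u0) :
    ∃ (K : NNReal) (U : ℝ × ℝ → ℝ), LipschitzWith K U ∧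
      ∀ (Z : ℝ → ℝ) (K' : NNReal), LipschitzWith K' Z → ∀ᵐ t : ℝ, 0 < t →
        HasDerivAt (fun s => U (Z s, s)) (sol.um (Z t) t * deriv Z t -
          (if Z t ≤ 0 then fl (sol.um (Z t) t) else fr (sol.um (Z t) t))) t ∧
        HasDerivAt (fun s => U (Z s, s)) (sol.up (Z t) t * deriv Z t -
          (if Z t < 0 then fl (sol.up (Z t) t) else fr (sol.up (Z t) t))) t := by
  obtain ⟨M, -, -, bu, bF⟩ := sol_bdd hl hr sol
  have mF : Measurable (Function.uncurry fun x t => dflux fl fr x (sol.u x t)) :=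
    meas_dflux hl hr sol.meas
  have bF' : ∀ x t, |dflux fl fr x (sol.u x t)| ≤ M := fun x t => bF _ _ (Or.inl ⟨x, t, rfl⟩)
  obtain ⟨K, U, hU, hFD⟩ := potential (u := sol.u) (F := fun x t => dflux fl fr x (sol.u x t))
    sol.meas mF bu bF' (fun s t hs ht α hα a b hab =>
    weak_time (u := sol.u) (F := fun x t => dflux fl fr x (sol.u x t)) sol.meas mF bu bF'
      sol.weak sol.timeCont hα hab hs ht)
  refine ⟨K, U, hU, fun Z K' hZ => ?_⟩
  have c1 := curve_deriv (u := sol.u) (F := fun x t => dflux fl fr x (sol.u x t)) hU hFD hZ isOpen_Iio (S := Iio 0) (by simp [closure_Iio])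
    (v := fun t => sol.um (Z t) t)
    (w := fun t => if Z t ≤ 0 then fl (sol.um (Z t) t) else fr (sol.um (Z t) t))
    (fun t ht => shift_lim (g := fun y => sol.u y t) (sol.um_spec (Z t) t ht))
    (fun t ht => shift_lim (g := fun y => dflux fl fr y (sol.u y t))
      (dflux_lim_l hl hr (sol.um_spec (Z t) t ht)))
  have c2 := curve_deriv (u := sol.u) (F := fun x t => dflux fl fr x (sol.u x t)) hU hFD hZ isOpen_Ioi (S := Ioi 0) (by simp [closure_Ioi])
    (v := fun t => sol.up (Z t) t)
    (w := fun t => if Z t < 0 then fl (sol.up (Z t) t) else fr (sol.up (Z t) t))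
    (fun t ht => shift_lim' (g := fun y => sol.u y t) (sol.up_spec (Z t) t ht))
    (fun t ht => shift_lim' (g := fun y => dflux fl fr y (sol.u y t))
      (dflux_lim_r hl hr (sol.up_spec (Z t) t ht)))
  filter_upwards [c1, c2] with t h1 h2 ht using ⟨h1 ht, h2 ht⟩

theorem sol_interface {a : ℝ} (hl : ContDiff ℝ 2 fl) (hr : ContDiff ℝ 2 fr) (ha : 0 < a)
    (hl2 : ∀ w, a ≤ deriv (deriv fl) w) (hr2 : ∀ w, a ≤ deriv (deriv fr) w)
    (hAB : fl A = fr B) (hA : deriv fl A ≤ 0) (hB : 0 ≤ deriv fr B)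
    (sol : ABSol fl fr A B u0) :
    ∀ᵐ t : ℝ, 0 < t → fl (sol.um 0 t) = fr (sol.up 0 t) ∧ fl A ≤ fl (sol.um 0 t) := by
  obtain ⟨M, bA, bB, bu, bF⟩ := sol_bdd hl.continuous hr.continuous sol
  have hM : 0 ≤ M := (abs_nonneg _).trans bA
  obtain ⟨K, U, hU, hder⟩ := sol_pot hl.continuous hr.continuous sol
  have mc : Measurable (fun p : ℝ × ℝ => cAB A B p.1) := (meas_cAB A B).comp measurable_fst
  have bc : ∀ x, cAB A B x = A ∨ cAB A B x = B := by
    intro x; unfold cAB; split_ifs <;> simp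
  have hint := interface_ineq (M := M + M)
    (E := fun x t => |sol.u x t - cAB A B x|)
    (Q := fun x t => Real.sign (sol.u x t - cAB A B x) *
          (dflux fl fr x (sol.u x t) - dflux fl fr x (cAB A B x)))
    (continuous_abs.measurable.comp (sol.meas.sub mc))
    ((meas_sign.comp (sol.meas.sub mc)).mul
      ((meas_dflux hl.continuous hr.continuous sol.meas).sub
        (meas_dflux hl.continuous hr.continuous mc)))
    (fun x t => by
      rw [abs_abs]
      refine (abs_sub _ _).trans (add_le_add (bu x t) ?_)
      rcases bc x with h | h <;> rw [h] <;> assumption)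
    (fun x t => by
      rw [abs_mul]
      refine (mul_le_of_le_one_left (abs_nonneg _) (abs_sign_le _)).trans ?_
      exact (abs_sub _ _).trans (add_le_add (bF _ _ (Or.inl ⟨x, t, rfl⟩))
        (bF _ _ (Or.inr (bc x)))))
    sol.interfaceEntropy
    (Qm := fun t => Real.sign (sol.um 0 t - A) * (fl (sol.um 0 t) - fl A))
    (Qp := fun t => Real.sign (sol.up 0 t - B) * (fr (sol.up 0 t) - fr B))
    (fun t ht => by
      refine (((cont_S hl.continuous A).tendsto _).comp (sol.um_spec 0 t ht)).congr' ?_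
      filter_upwards [self_mem_nhdsWithin] with y hy
      have h : y < 0 := hy
      simp [dflux, cAB, h, h.le])
    (fun t ht => by
      refine (((cont_S hr.continuous B).tendsto _).comp (sol.up_spec 0 t ht)).congr' ?_
      filter_upwards [self_mem_nhdsWithin] with y hy
      have h : 0 < y := hy
      simp [dflux, cAB, not_lt.2 h.le, not_le.2 h])
  filter_upwards [hint, hder (fun _ => 0) 0 (LipschitzWith.const 0)] with t h1 h2 ht
  obtain ⟨d1, d2⟩ := h2 ht
  have e := d1.unique d2
  simp at e
  refine ⟨e, ?_⟩
  by_contra hlt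
  push Not at hlt
  have h3 := h1 ht
  have t1 := tangent hl ha hl2 A (sol.um 0 t)
  have t2 := tangent hr ha hr2 B (sol.up 0 t)
  have p1 : A < sol.um 0 t := by
    by_contra h; push Not at h
    nlinarith
  have p2 : sol.up 0 t < B := by
    by_contra h; push Not at h
    nlinarith
  simp only [Real.sign_of_pos (sub_pos.2 p1), Real.sign_of_neg (sub_neg.2 p2)] at h3
  linarith

theorem um_bdd (sol : ABSol fl fr A B u0) {M : ℝ} (h : ∀ x t, |sol.u x t| ≤ M) {x t : ℝ}
    (ht : 0 < t) : |sol.um x t| ≤ M :=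
  le_of_tendsto (sol.um_spec x t ht).norm (Eventually.of_forall fun y => h y t)

end


theorem lip_cmul {f : ℝ → ℝ} {K : NNReal} (hf : LipschitzWith K f) (c : ℝ) :
    LipschitzWith (‖c‖₊ * K) (fun x => c * f x) := by
  apply LipschitzWith.of_dist_le_mul
  intro x y
  rw [Real.dist_eq, ← mul_sub, abs_mul]
  have := hf.dist_le_mul x y
  rw [Real.dist_eq] at this
  calc |c| * |f x - f y| ≤ |c| * (K * dist x y) := mul_le_mul_of_nonneg_left this (abs_nonneg _)
    _ = _ := by simp [mul_assoc]

/-- piecewise linear potential of the connection -/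
def GAB (A B x : ℝ) : ℝ := A * min x 0 + B * max x 0

theorem GAB_lip (A B : ℝ) : ∃ K, LipschitzWith K (GAB A B) :=
  ⟨_, (lip_cmul (LipschitzWith.id.min_const 0) A).add (lip_cmul (LipschitzWith.id.max_const 0) B)⟩

theorem GAB_zero (A B : ℝ) : GAB A B 0 = 0 := by simp [GAB]

theorem GAB_neg (A B : ℝ) {Z : ℝ → ℝ} {t v : ℝ} (hd : HasDerivAt Z v t) (h : Z t < 0) :
    HasDerivAt (fun s => GAB A B (Z s)) (A * v) t := by
  refine (hd.const_mul A).congr_of_eventuallyEq ?_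
  filter_upwards [hd.continuousAt.eventually_lt_const h] with s hs
  simp [GAB, min_eq_left hs.le, max_eq_right hs.le]

theorem GAB_pos (A B : ℝ) {Z : ℝ → ℝ} {t v : ℝ} (hd : HasDerivAt Z v t) (h : 0 < Z t) :
    HasDerivAt (fun s => GAB A B (Z s)) (B * v) t := by
  refine (hd.const_mul B).congr_of_eventuallyEq ?_
  filter_upwards [hd.continuousAt.eventually_const_lt h] with s hs
  simp [GAB, min_eq_right hs.le, max_eq_left hs.le]

theorem right_deriv_nonneg {H : ℝ → ℝ} {t v : ℝ} (hd : HasDerivAt H v t)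
    (h : ∀ᶠ s in nhdsWithin t (Ioi t), H t ≤ H s) : 0 ≤ v := by
  have h1 := (hasDerivAt_iff_tendsto_slope.1 hd).mono_left
    (nhdsWithin_mono t (fun y (hy : y ∈ Ioi t) => ne_of_gt hy))
  refine ge_of_tendsto h1 ?_
  filter_upwards [h, self_mem_nhdsWithin] with s hs hts
  have : t < s := hts
  rw [slope_def_field]
  exact div_nonneg (by linarith) (by linarith)

theorem fermat_max {f : ℝ → ℝ} (hf : Differentiable ℝ f) {z q : ℝ}
    (h : ∀ p, p * z - f p ≤ q * z - f q) : z = deriv f q := by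
  have hm : IsLocalMin (fun p => f p - p * z) q :=
    Eventually.of_forall fun p => by have := h p; simp only; linarith
  have hd : HasDerivAt (fun p => f p - p * z) (deriv f q - 1 * z) q :=
    (hf q).hasDerivAt.sub ((hasDerivAt_id q).mul_const z)
  have := hm.hasDerivAt_eq_zero hd
  linarith

section
variable {fl fr : ℝ → ℝ} {A B : ℝ} {u0 : ℝ → ℝ}

theorem gic_props {a T M : ℝ} (hl : ContDiff ℝ 2 fl) (hr : ContDiff ℝ 2 fr) (ha : 0 < a)
    (hl2 : ∀ w, a ≤ deriv (deriv fl) w) (hr2 : ∀ w, a ≤ deriv (deriv fr) w)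
    (hAB : fl A = fr B) (sol : ABSol fl fr A B u0) (bu : ∀ x t, |sol.u x t| ≤ M)
    {L : NNReal} (hL : ∀ v, |v| ≤ M → |deriv fl v| ≤ L ∧ |deriv fr v| ≤ L)
    {K : NNReal} {U : ℝ × ℝ → ℝ} (hU : LipschitzWith K U)
    (hder : ∀ (Z : ℝ → ℝ) (K' : NNReal), LipschitzWith K' Z → ∀ᵐ t : ℝ, 0 < t →
        HasDerivAt (fun s => U (Z s, s)) (sol.um (Z t) t * deriv Z t -
          (if Z t ≤ 0 then fl (sol.um (Z t) t) else fr (sol.um (Z t) t))) t ∧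
        HasDerivAt (fun s => U (Z s, s)) (sol.up (Z t) t * deriv Z t -
          (if Z t < 0 then fl (sol.up (Z t) t) else fr (sol.up (Z t) t))) t)
    {ζ : ℝ → ℝ} (hg : IsABgic T fl fr (fl A) sol ζ) :
    LipschitzOnWith L ζ (Icc 0 T) ∧
    (∀ s ∈ Icc 0 T, ∀ t ∈ Icc 0 T, s ≤ t →
      GAB A B (ζ t) - GAB A B (ζ s) - fl A * (t - s) ≤ U (ζ t, t) - U (ζ s, s)) ∧
    (∀ s ∈ Icc 0 T, ∀ t ∈ Icc 0 T, s ≤ t → (∀ τ ∈ Icc s t, ζ τ < 0) → ∀ p,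
      p * (ζ t - ζ s) - fl p * (t - s) ≤ U (ζ t, t) - U (ζ s, s)) ∧
    (∀ s ∈ Icc 0 T, ∀ t ∈ Icc 0 T, s ≤ t → (∀ τ ∈ Icc s t, 0 < ζ τ) → ∀ p,
      p * (ζ t - ζ s) - fr p * (t - s) ≤ U (ζ t, t) - U (ζ s, s)) := by
  obtain ⟨⟨K1, hK1⟩, hae⟩ := hg
  obtain ⟨Z, hZ, hEq⟩ := hK1.extend_real
  rw [ae_restrict_iff' measurableSet_Icc] at hae
  have hW : LipschitzWith (K * max K1 1) (fun s => U (Z s, s)) :=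
    hU.comp (hZ.prodMk LipschitzWith.id)
  have hd : ∀ᵐ t : ℝ, t ∈ Ioo 0 T →
      (Z t < 0 → HasDerivAt Z (deriv fl (sol.um (Z t) t)) t ∧ HasDerivAt (fun s => U (Z s, s))
        (sol.um (Z t) t * deriv fl (sol.um (Z t) t) - fl (sol.um (Z t) t)) t) ∧
      (0 < Z t → HasDerivAt Z (deriv fr (sol.um (Z t) t)) t ∧ HasDerivAt (fun s => U (Z s, s))
        (sol.um (Z t) t * deriv fr (sol.um (Z t) t) - fr (sol.um (Z t) t)) t) ∧
      (Z t = 0 → HasDerivAt Z 0 t ∧ HasDerivAt (fun s => U (Z s, s)) (- fl A) t) := by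
    filter_upwards [hae, hder Z K1 hZ, zero_deriv_ae Z, hZ.ae_differentiableAt (μ := volume)]
      with t h1 h2 h3 h4 ht
    have hmem : t ∈ Icc 0 T := ⟨ht.1.le, ht.2.le⟩
    have hloc : Z =ᶠ[nhds t] ζ := by
      filter_upwards [Icc_mem_nhds ht.1 ht.2] with s hs using (hEq hs).symm
    have h1' := h1 hmem
    rw [hEq hmem] at h1'
    obtain ⟨i1, i2, i3⟩ := h1'
    obtain ⟨d1, -⟩ := h2 ht.1
    refine ⟨fun h => ?_, fun h => ?_, fun h => ?_⟩
    · have j := (i1 h).1.congr_of_eventuallyEq hloc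
      refine ⟨j, ?_⟩
      rwa [j.deriv, if_pos h.le] at d1
    · have j := (i2 h).1.congr_of_eventuallyEq hloc
      refine ⟨j, ?_⟩
      rwa [j.deriv, if_neg (not_le.2 h)] at d1
    · have j := h4.hasDerivAt
      rw [h3 h _ j] at j
      refine ⟨j, ?_⟩
      rw [j.deriv, if_pos h.le, h, (i3 h).1, mul_zero, zero_sub] at d1
      exact d1
  have hgen : ∀ (f : ℝ → ℝ) (p : ℝ), ∀ s t : ℝ, s ≤ t →
      (∀ᵐ τ : ℝ, τ ∈ Ioo s t → ∃ q, HasDerivAt Z (deriv f q) τ ∧ HasDerivAt (fun s => U (Z s, s))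
        (q * deriv f q - f q) τ ∧ f q + deriv f q * (p - q) ≤ f p) →
      p * (Z t - Z s) - f p * (t - s) ≤ U (Z t, t) - U (Z s, s) := by
    intro f p s t hst h
    have := lip_mono ((hW.sub (lip_cmul hZ p)).add (lip_cmul LipschitzWith.id (f p))) hst (by
      filter_upwards [h] with τ h1 hτ v hv
      obtain ⟨q, e1, e2, e3⟩ := h1 hτ
      have := (e2.sub (e1.const_mul p)).add ((hasDerivAt_id τ).const_mul (f p))
      have e := hv.unique this
      rw [e]
      nlinarith)
    simp only [Pi.add_apply, Pi.sub_apply, id] at this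
    nlinarith
  have hsub : ∀ s ∈ Icc 0 T, ∀ t ∈ Icc 0 T, ∀ τ ∈ Ioo s t, τ ∈ Ioo 0 T := fun s hs t ht τ hτ =>
    ⟨lt_of_le_of_lt hs.1 hτ.1, lt_of_lt_of_le hτ.2 ht.2⟩
  refine ⟨?_, ?_, ?_, ?_⟩
  · have hb : LipschitzOnWith L Z (Icc 0 T) := by
      refine lip_bound hZ ?_
      filter_upwards [hd] with t h1 ht v hv
      obtain ⟨i1, i2, i3⟩ := h1 ht
      rcases lt_trichotomy (Z t) 0 with h | h | h
      · rw [hv.unique (i1 h).1]; exact (hL _ (um_bdd sol bu ht.1)).1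
      · rw [hv.unique (i3 h).1]; simp
      · rw [hv.unique (i2 h).1]; exact (hL _ (um_bdd sol bu ht.1)).2
    intro x hx y hy
    rw [hEq hx, hEq hy]; exact hb hx hy
  · intro s hs t ht hst
    rw [hEq hs, hEq ht]
    obtain ⟨KG, hKG⟩ := GAB_lip A B
    have := lip_mono ((hW.sub (hKG.comp hZ)).add (lip_cmul LipschitzWith.id (fl A))) hst (by
      filter_upwards [hd, zero_deriv_ae (fun τ => GAB A B (Z τ))] with τ h1 h2 hτ v hv
      obtain ⟨i1, i2, i3⟩ := h1 (hsub s hs t ht τ hτ)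
      rcases lt_trichotomy (Z τ) 0 with h | h | h
      · obtain ⟨e1, e2⟩ := i1 h
        have := (e2.sub (GAB_neg A B e1 h)).add ((hasDerivAt_id τ).const_mul (fl A))
        rw [hv.unique this]
        have := tangent hl ha hl2 (sol.um (Z τ) τ) A
        nlinarith
      · obtain ⟨e1, e2⟩ := i3 h
        have e3 := (e2.add ((hasDerivAt_id τ).const_mul (fl A))).sub hv
        have e4 : HasDerivAt (fun τ => GAB A B (Z τ)) (-fl A + fl A * 1 - v) τ := by
          refine e3.congr_of_eventuallyEq (Eventually.of_forall fun r => ?_)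
          simp only [Pi.add_apply, Pi.sub_apply, Function.comp_apply]
          ring
        have := h2 (by rw [h, GAB_zero]) _ e4
        linarith
      · obtain ⟨e1, e2⟩ := i2 h
        have := (e2.sub (GAB_pos A B e1 h)).add ((hasDerivAt_id τ).const_mul (fl A))
        rw [hv.unique this]
        have := tangent hr ha hr2 (sol.um (Z τ) τ) B
        nlinarith)
    simp only [Pi.add_apply, Pi.sub_apply, id, Function.comp_apply] at this
    nlinarith
  · intro s hs t ht hst hneg p
    rw [hEq hs, hEq ht]
    refine hgen fl p s t hst ?_
    filter_upwards [hd] with τ h1 hτ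
    have hτT := hsub s hs t ht τ hτ
    have hn := hneg τ ⟨hτ.1.le, hτ.2.le⟩
    rw [hEq ⟨hτT.1.le, hτT.2.le⟩] at hn
    obtain ⟨e1, e2⟩ := (h1 hτT).1 hn
    exact ⟨_, e1, e2, tangent hl ha hl2 _ _⟩
  · intro s hs t ht hst hneg p
    rw [hEq hs, hEq ht]
    refine hgen fr p s t hst ?_
    filter_upwards [hd] with τ h1 hτ
    have hτT := hsub s hs t ht τ hτ
    have hn := hneg τ ⟨hτ.1.le, hτ.2.le⟩
    rw [hEq ⟨hτT.1.le, hτT.2.le⟩] at hn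
    obtain ⟨e1, e2⟩ := (h1 hτT).2.1 hn
    exact ⟨_, e1, e2, tangent hr ha hr2 _ _⟩
end

/-- the set-valued map `x ↦ C(u,x)` has closed graph with respect
to uniform convergence on `[0,T]` (Proposition 4.1 (ii) of the paper). -/
theorem charSet_closed_graph
    {T a θl θr A B : ℝ} {fl fr : ℝ → ℝ}
    (hT : 0 < T)
    (hflC : ContDiff ℝ 2 fl) (hfrC : ContDiff ℝ 2 fr)
    (ha : 0 < a)
    (hfl2 : ∀ w : ℝ, a ≤ deriv (deriv fl) w)
    (hfr2 : ∀ w : ℝ, a ≤ deriv (deriv fr) w)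
    (hf0 : fl 0 = fr 0) (hf1 : fl 1 = fr 1)
    (hθl : deriv fl θl = 0) (hθr : deriv fr θr = 0)
    (hθl0 : 0 ≤ θl) (hθr1 : θr ≤ 1)
    (hAB : fl A = fr B) (hA' : deriv fl A ≤ 0) (hB' : 0 ≤ deriv fr B)
    {u0 : ℝ → ℝ} (hu0 : IsLinf u0) (sol : ABSol fl fr A B u0)
    (xs : ℕ → ℝ) (x : ℝ) (ζs : ℕ → ℝ → ℝ) (ζ : ℝ → ℝ)
    (hx : Tendsto xs atTop (nhds x))
    (hmem : ∀ n, ζs n ∈ charSet T fl fr (fl A) sol (xs n))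
    (hunif : TendstoUniformlyOn ζs ζ atTop (Icc 0 T)) :
    ζ ∈ charSet T fl fr (fl A) sol x := by
  obtain ⟨M, -, -, bu, -⟩ := sol_bdd hflC.continuous hfrC.continuous sol
  obtain ⟨N1, hN1⟩ := flux_bdd (hflC.continuous_deriv (by norm_num)) M
  obtain ⟨N2, hN2⟩ := flux_bdd (hfrC.continuous_deriv (by norm_num)) M
  obtain ⟨K, U, hU, hder⟩ := sol_pot hflC.continuous hfrC.continuous sol
  have hint := sol_interface hflC hfrC ha hfl2 hfr2 hAB hA' hB' sol
  have hL : ∀ v, |v| ≤ M → |deriv fl v| ≤ (max N1 N2).toNNReal ∧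
      |deriv fr v| ≤ (max N1 N2).toNNReal := fun v hv =>
    ⟨(hN1 v hv).trans ((le_max_left _ _).trans (Real.le_coe_toNNReal _)),
     (hN2 v hv).trans ((le_max_right _ _).trans (Real.le_coe_toNNReal _))⟩
  generalize (max N1 N2).toNNReal = L at hL
  have hP := fun n => gic_props hflC hfrC ha hfl2 hfr2 hAB sol bu hL hU hder (hmem n).1
  have hpt : ∀ t ∈ Icc 0 T, Tendsto (fun n => ζs n t) atTop (nhds (ζ t)) := fun t ht =>
    hunif.tendsto_at ht
  have hUt : ∀ t ∈ Icc 0 T, Tendsto (fun n => U (ζs n t, t)) atTop (nhds (U (ζ t, t))) := by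
    intro t ht
    exact (hU.continuous.tendsto _).comp ((hpt t ht).prodMk_nhds tendsto_const_nhds)
  have hlip : LipschitzOnWith L ζ (Icc 0 T) := by
    apply LipschitzOnWith.of_dist_le_mul
    intro s hs t ht
    exact le_of_tendsto' ((hpt s hs).dist (hpt t ht))
      (fun n => (hP n).1.dist_le_mul s hs t ht)
  have l1 : ∀ s ∈ Icc 0 T, ∀ t ∈ Icc 0 T, s ≤ t →
      GAB A B (ζ t) - GAB A B (ζ s) - fl A * (t - s) ≤ U (ζ t, t) - U (ζ s, s) := by
    intro s hs t ht hst
    obtain ⟨KG, hKG⟩ := GAB_lip A B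
    have hG : ∀ t ∈ Icc 0 T, Tendsto (fun n => GAB A B (ζs n t)) atTop (nhds (GAB A B (ζ t))) :=
      fun t ht => (hKG.continuous.tendsto _).comp (hpt t ht)
    exact le_of_tendsto_of_tendsto' (((hG t ht).sub (hG s hs)).sub_const _)
      ((hUt t ht).sub (hUt s hs)) (fun n => (hP n).2.1 s hs t ht hst)
  have l2 : ∀ s ∈ Icc 0 T, ∀ t ∈ Icc 0 T, s ≤ t → ∀ c > 0, (∀ τ ∈ Icc s t, ζ τ < -c) → ∀ p,
      p * (ζ t - ζ s) - fl p * (t - s) ≤ U (ζ t, t) - U (ζ s, s) := by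
    intro s hs t ht hst c hc hneg p
    refine le_of_tendsto_of_tendsto ((((hpt t ht).sub (hpt s hs)).const_mul p).sub_const _)
      ((hUt t ht).sub (hUt s hs)) ?_
    filter_upwards [Metric.tendstoUniformlyOn_iff.1 hunif c hc] with n hn
    refine (hP n).2.2.1 s hs t ht hst (fun τ hτ => ?_) p
    have h1 := hn τ ⟨hs.1.trans hτ.1, hτ.2.trans ht.2⟩
    rw [Real.dist_eq, abs_lt] at h1
    linarith [hneg τ hτ]
  have l3 : ∀ s ∈ Icc 0 T, ∀ t ∈ Icc 0 T, s ≤ t → ∀ c > 0, (∀ τ ∈ Icc s t, c < ζ τ) → ∀ p,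
      p * (ζ t - ζ s) - fr p * (t - s) ≤ U (ζ t, t) - U (ζ s, s) := by
    intro s hs t ht hst c hc hneg p
    refine le_of_tendsto_of_tendsto ((((hpt t ht).sub (hpt s hs)).const_mul p).sub_const _)
      ((hUt t ht).sub (hUt s hs)) ?_
    filter_upwards [Metric.tendstoUniformlyOn_iff.1 hunif c hc] with n hn
    refine (hP n).2.2.2 s hs t ht hst (fun τ hτ => ?_) p
    have h1 := hn τ ⟨hs.1.trans hτ.1, hτ.2.trans ht.2⟩
    rw [Real.dist_eq, abs_lt] at h1
    linarith [hneg τ hτ]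
  have hTT : T ∈ Icc 0 T := ⟨hT.le, le_rfl⟩
  refine ⟨⟨⟨L, hlip⟩, ?_⟩, ?_⟩
  swap
  · refine tendsto_nhds_unique (hpt T hTT) ?_
    have : (fun n => ζs n T) = xs := funext fun n => (hmem n).2
    rw [this]; exact hx
  obtain ⟨Z, hZ, hEq⟩ := hlip.extend_real
  rw [Measure.restrict_congr_set (Ioo_ae_eq_Icc (μ := volume) (a := (0:ℝ)) (b := T)).symm,
    ae_restrict_iff' measurableSet_Ioo]
  filter_upwards [hder Z L hZ, hint, zero_deriv_ae Z, zero_deriv_ae (fun τ => GAB A B (Z τ)),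
    hZ.ae_differentiableAt (μ := volume),
    (hZ.comp LipschitzWith.id).ae_differentiableAt (μ := volume),
    ((GAB_lip A B).choose_spec.comp hZ).ae_differentiableAt (μ := volume)]
    with t h1 h2 h3 h4 h5 _ h7 ht
  have hmt : t ∈ Icc 0 T := ⟨ht.1.le, ht.2.le⟩
  have hloc : ζ =ᶠ[nhds t] Z := by
    filter_upwards [Icc_mem_nhds ht.1 ht.2] with s hs using hEq hs
  obtain ⟨d1, d2⟩ := h1 ht.1
  have hz := h5.hasDerivAt
  have hE := hEq hmt
  have ev : ∀ c : ℝ, ∀ δ > 0, ∀ᶠ s in nhdsWithin t (Ioi t), s < t + δ ∧ s < T ∧ t < s := by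
    intro c δ hδ
    filter_upwards [mem_nhdsWithin_of_mem_nhds (Iio_mem_nhds (show t < t + δ by linarith)),
      mem_nhdsWithin_of_mem_nhds (Iio_mem_nhds ht.2), self_mem_nhdsWithin] with s e1 e2 e3
    exact ⟨e1, e2, e3⟩
  refine ⟨fun h => ?_, fun h => ?_, fun h => ?_⟩
  · have h' : Z t < 0 := hE ▸ h
    have hcont := hZ.continuous.continuousAt.eventually_lt_const (show Z t < -(-(Z t)/2) by linarith)
    obtain ⟨δ, hδ, hb⟩ := Metric.eventually_nhds_iff.1 hcont
    have key : ∀ v, HasDerivAt (fun s => U (Z s, s)) v t → ∀ p, p * deriv Z t - fl p ≤ v := by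
      intro v hv p
      have hd := (hv.sub (hz.const_mul p)).add ((hasDerivAt_id t).const_mul (fl p))
      have := right_deriv_nonneg hd (by
        filter_upwards [ev 0 δ hδ] with s ⟨e1, e2, e3⟩
        have hms : s ∈ Icc 0 T := ⟨ht.1.le.trans e3.le, e2.le⟩
        have := l2 t hmt s hms e3.le (-(Z t)/2) (by linarith) (fun τ hτ => by
          rw [hEq ⟨ht.1.le.trans hτ.1, hτ.2.trans e2.le⟩]
          apply hb
          rw [Real.dist_eq, abs_of_nonneg (by linarith [hτ.1])]
          linarith [hτ.2]) p
        rw [hEq hms, hE] at this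
        simp only [Pi.add_apply, Pi.sub_apply, id]
        nlinarith)
      linarith
    rw [if_pos h'.le] at d1
    rw [if_pos h'] at d2
    have hfd : Differentiable ℝ fl := hflC.differentiable (by norm_num)
    have k1 := fermat_max hfd (key _ d1)
    have k2 := fermat_max hfd (key _ d2)
    rw [hE, ← k1, ← k2]
    exact ⟨hz.congr_of_eventuallyEq hloc, rfl⟩
  · have h' : 0 < Z t := hE ▸ h
    have hcont := hZ.continuous.continuousAt.eventually_const_lt (show Z t / 2 < Z t by linarith)
    obtain ⟨δ, hδ, hb⟩ := Metric.eventually_nhds_iff.1 hcont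
    have key : ∀ v, HasDerivAt (fun s => U (Z s, s)) v t → ∀ p, p * deriv Z t - fr p ≤ v := by
      intro v hv p
      have hd := (hv.sub (hz.const_mul p)).add ((hasDerivAt_id t).const_mul (fr p))
      have := right_deriv_nonneg hd (by
        filter_upwards [ev 0 δ hδ] with s ⟨e1, e2, e3⟩
        have hms : s ∈ Icc 0 T := ⟨ht.1.le.trans e3.le, e2.le⟩
        have := l3 t hmt s hms e3.le (Z t / 2) (by linarith) (fun τ hτ => by
          rw [hEq ⟨ht.1.le.trans hτ.1, hτ.2.trans e2.le⟩]
          apply hb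
          rw [Real.dist_eq, abs_of_nonneg (by linarith [hτ.1])]
          linarith [hτ.2]) p
        rw [hEq hms, hE] at this
        simp only [Pi.add_apply, Pi.sub_apply, id]
        nlinarith)
      linarith
    rw [if_neg (not_le.2 h')] at d1
    rw [if_neg (not_lt.2 h'.le)] at d2
    have hfd : Differentiable ℝ fr := hfrC.differentiable (by norm_num)
    have k1 := fermat_max hfd (key _ d1)
    have k2 := fermat_max hfd (key _ d2)
    rw [hE, ← k1, ← k2]
    exact ⟨hz.congr_of_eventuallyEq hloc, rfl⟩
  · have h' : Z t = 0 := hE ▸ h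
    obtain ⟨r1, r2⟩ := h2 ht.1
    have hz0 := h3 h' _ hz
    rw [hz0, if_pos h'.le, h', mul_zero, zero_sub] at d1
    have hG : HasDerivAt (fun τ => GAB A B (Z τ)) (deriv (GAB A B ∘ Z) t) t := h7.hasDerivAt
    have hG0 := h4 (by rw [h', GAB_zero]) _ hG
    rw [hG0] at hG
    have hd := (d1.sub hG).add ((hasDerivAt_id t).const_mul (fl A))
    have := right_deriv_nonneg hd (by
      filter_upwards [ev 0 1 one_pos] with s ⟨e1, e2, e3⟩
      have hms : s ∈ Icc 0 T := ⟨ht.1.le.trans e3.le, e2.le⟩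
      have := l1 t hmt s hms e3.le
      rw [hEq hms, hE] at this
      simp only [Pi.add_apply, Pi.sub_apply, id]
      nlinarith)
    have e : fl (sol.um 0 t) = fl A := by linarith
    exact ⟨e, by rw [← r1, e]⟩
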